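/- arXiv:2004.00837 — 6 statements merged into one kernel-verified Lean document; each statement's English description precedes it below -/
import Mathlib

section
/- Per-step approximate composite mirror descent inequality: Let K ⊆ E be a nonempty convex set whose N-diameter is at most D_K, let ω : E → ℝ be differentiable, σ-strongly convex with respect to N on K (σ > 0), with ∇ω G_ω-Lipschitz with respect to N on K. Let x₀ ∈ K, let ℓ : E → ℝ be convex with a subgradient g at x₀ relative to K satisfying N_*(g) ≤ G_ℓ, let r : E → ℝ be convex, and let η > 0. Suppose y* ∈ K minimizes F(x) = ⟪g, x⟫ + r(x) + (1/η) V_ω(x, x₀) over K. Then for all x, y ∈ K: ℓ(x₀) − ℓ(x) + r(y*) − r(x) ≤ (1/η) ( V_ω(x, x₀) − V_ω(x, y) ) + ( G_ℓ + (2/η) G_ω D_K ) N(y − y*) + (η / (2σ)) G_ℓ². -/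
open scoped RealInnerProductSpace

/-- Euclidean space `ℝ^d` with the Euclidean inner product. -/
abbrev Euc (d : ℕ) := EuclideanSpace ℝ (Fin d)

/-- The dual norm of `N`: `N_*(g) = sup {⟪g, x⟫ : N x ≤ 1}`. -/
noncomputable def dualNorm (d : ℕ) (N : Euc d → ℝ) (g : Euc d) : ℝ :=
  sSup ((fun x => ⟪g, x⟫) '' {x : Euc d | N x ≤ 1})

/-!
Write `V` for the Bregman divergence of `ω`. The subgradient inequality bounds `ℓ x₀ - ℓ x` by
`⟪g, x₀ - y*⟫ + ⟪g, y* - x⟫`. First-order optimality of `y*` and the three-point identity for `V`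
bound the second term, together with `r y* - r x`, by `(V x x₀ - V x y* - V y* x₀) / η`. Here
`V y* x₀` is at least quadratic in `N (y* - x₀)`, so `-V y* x₀ / η` absorbs the first term by
Young's inequality. Replacing the exact minimizer by `y` costs `(V x y - V x y*) / η`, which the
three-point identity, used once more, reduces to the Lipschitz bound on the gradient of `ω`.
-/

section DualNorm

theorem exists_forall_le_mul_seminorm {E : Type*} [AddCommGroup E] [Module ℝ E]
    [FiniteDimensional ℝ E] (p : Seminorm ℝ E) (hp : ∀ x, x ≠ 0 → 0 < p x) (f : E →ₗ[ℝ] ℝ) :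
    ∃ C, 0 ≤ C ∧ ∀ x, f x ≤ C * p x := by
  -- Linear forms are continuous for the norm `p`, because `E` is finite-dimensional.
  let : NormedAddCommGroup E := AddGroupNorm.toNormedAddCommGroup
    { p.toAddGroupSeminorm with
      eq_zero_of_map_eq_zero' := fun x hx => by_contra fun hx₀ => (hp x hx₀).ne' hx }
  let : NormedSpace ℝ E := ⟨fun c x => (map_smul_eq_mul p c x).le⟩
  let F : StrongDual ℝ E := LinearMap.toContinuousLinearMap f
  exact ⟨‖F‖, norm_nonneg F, fun x => (le_abs_self _).trans (F.le_opNorm x)⟩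

variable {d : ℕ}

theorem bddAbove_image_inner_seminorm_le_one (p : Seminorm ℝ (Euc d))
    (hp : ∀ x, x ≠ 0 → 0 < p x) (g : Euc d) :
    BddAbove ((fun x => ⟪g, x⟫) '' {x | p x ≤ 1}) := by
  obtain ⟨C, hC, hgC⟩ := exists_forall_le_mul_seminorm p hp (innerₗ (Euc d) g)
  refine ⟨C, ?_⟩
  rintro _ ⟨x, hx, rfl⟩
  exact (hgC x).trans (mul_le_of_le_one_right hC hx)

theorem inner_le_dualNorm_mul (p : Seminorm ℝ (Euc d)) (hp : ∀ x, x ≠ 0 → 0 < p x)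
    (g x : Euc d) : ⟪g, x⟫ ≤ dualNorm d p g * p x := by
  obtain rfl | hx := eq_or_ne x 0
  · simp
  have hpx : 0 < p x := hp x hx
  have hunit : p ((p x)⁻¹ • x) ≤ 1 := by
    rw [map_smul_eq_mul, norm_inv, Real.norm_of_nonneg hpx.le, inv_mul_cancel₀ hpx.ne']
  have hscaled : ⟪g, (p x)⁻¹ • x⟫ ≤ dualNorm d p g :=
    le_csSup (bddAbove_image_inner_seminorm_le_one p hp g) ⟨_, hunit, rfl⟩
  rwa [real_inner_smul_right, inv_mul_le_iff₀' hpx] at hscaled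

theorem inner_le_mul_of_dualNorm_le {p : Seminorm ℝ (Euc d)} (hp : ∀ x, x ≠ 0 → 0 < p x)
    {g : Euc d} {C : ℝ} (hg : dualNorm d p g ≤ C) (x : Euc d) : ⟪g, x⟫ ≤ C * p x :=
  (inner_le_dualNorm_mul p hp g x).trans (mul_le_mul_of_nonneg_right hg (apply_nonneg p x))

end DualNorm

section Bregman

/-- The Bregman divergence `ω x - ω y - dω y (x - y)` of a function `ω` on a real vector space, the
distance-like regularizer of a mirror descent step. The derivative is passed as a separate argument
`dω`, valued in the dual space, so that no inner product is needed and `dω` has to be the derivative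
of `ω` only where this is assumed. -/
def bregman {E : Type*} [AddCommGroup E] [Module ℝ E] [TopologicalSpace E]
    (ω : E → ℝ) (dω : E → StrongDual ℝ E) (x y : E) : ℝ :=
  ω x - ω y - dω y (x - y)

section Algebraic

variable {E : Type*} [AddCommGroup E] [Module ℝ E] [TopologicalSpace E]

theorem bregman_three_point (ω : E → ℝ) (dω : E → StrongDual ℝ E) (x y z : E) :
    bregman ω dω x z = bregman ω dω x y + bregman ω dω y z + (dω y - dω z) (x - y) := by
  simp only [bregman, sub_apply, map_sub]
  ring

theorem bregman_sub_bregman_le {ω : E → ℝ} {dω : E → StrongDual ℝ E} {y z : E}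
    (h : 0 ≤ bregman ω dω y z) (x : E) :
    bregman ω dω x y - bregman ω dω x z ≤ (dω z - dω y) (x - y) := by
  rw [bregman_three_point ω dω x y z, ← neg_sub (dω y), neg_apply]
  linarith

end Algebraic

variable {E : Type*} [NormedAddCommGroup E] [NormedSpace ℝ E]

theorem hasFDerivWithinAt_bregman_left {ω : E → ℝ} {dω : E → StrongDual ℝ E} {s : Set E} {x : E}
    (hω : HasFDerivWithinAt ω (dω x) s x) (y : E) :
    HasFDerivWithinAt (fun u => bregman ω dω u y) (dω x - dω y) s x :=
  (hω.sub_const (ω y)).sub ((dω y).hasFDerivWithinAt.comp x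
    ((hasFDerivWithinAt_id x s).sub_const y) (Set.mapsTo_univ _ _))

end Bregman

section MirrorStep

variable {E : Type*} [NormedAddCommGroup E] [NormedSpace ℝ E] {K : Set E} {r : E → ℝ} {a x : E}

theorem sub_le_fderiv_of_isMinOn_add_convexOn {φ : E → ℝ} {φ' : StrongDual ℝ E}
    (hr : ConvexOn ℝ K r) (hmin : IsMinOn (fun u => φ u + r u) K a)
    (hφ : HasFDerivWithinAt φ φ' K a) (ha : a ∈ K) (hx : x ∈ K) :
    r a - r x ≤ φ' (x - a) := by
  -- On the epigraph of `r` the nonsmooth term becomes linear, and the usual Fermat rule applies.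
  let epi : Set (E × ℝ) := {q | q.1 ∈ K ∧ r q.1 ≤ q.2}
  have hmin_epi : IsMinOn (fun q : E × ℝ => φ q.1 + q.2) epi (a, r a) := fun q hq =>
    (hmin hq.1).trans (add_le_add_right hq.2 (φ q.1))
  have hderiv : HasFDerivWithinAt (fun q : E × ℝ => φ q.1 + q.2)
      (φ' ∘L .fst ℝ E ℝ + .snd ℝ E ℝ) epi (a, r a) :=
    (hφ.comp (a, r a) hasFDerivWithinAt_fst fun _ hq => hq.1).add hasFDerivWithinAt_snd
  have hdir : (x, r x) - (a, r a) ∈ posTangentConeAt epi (a, r a) :=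
    sub_mem_posTangentConeAt_of_segment_subset <|
      hr.convex_epigraph.segment_subset ⟨ha, le_rfl⟩ ⟨hx, le_rfl⟩
  have hnonneg : 0 ≤ φ' (x - a) + (r x - r a) :=
    hmin_epi.localize.hasFDerivWithinAt_nonneg hderiv hdir
  linarith

theorem le_mul_bregman_sub_of_isMinOn {ω : E → ℝ} {dω : E → StrongDual ℝ E} {g : StrongDual ℝ E}
    {c : ℝ} {x₀ : E} (hr : ConvexOn ℝ K r) (hω : HasFDerivWithinAt ω (dω a) K a)
    (hmin : IsMinOn (fun u => g u + r u + c * bregman ω dω u x₀) K a) (ha : a ∈ K) (hx : x ∈ K) :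
    g (a - x) + r a - r x ≤
      c * (bregman ω dω x x₀ - bregman ω dω x a - bregman ω dω a x₀) := by
  have hmin' : IsMinOn (fun u => (g u + c * bregman ω dω u x₀) + r u) K a := by
    simpa only [add_right_comm] using hmin
  have hderiv : HasFDerivWithinAt (fun u => g u + c * bregman ω dω u x₀)
      (g + c • (dω a - dω x₀)) K a :=
    g.hasFDerivWithinAt.add ((hasFDerivWithinAt_bregman_left hω x₀).const_mul c)
  have hopt : r a - r x ≤ g (x - a) + c * (dω a - dω x₀) (x - a) :=
    sub_le_fderiv_of_isMinOn_add_convexOn hr hmin' hderiv ha hx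
  have hneg : g (a - x) = -g (x - a) := by rw [← map_neg, neg_sub]
  rw [bregman_three_point ω dω x a x₀]
  linarith

end MirrorStep

theorem per_step_approx_composite_md_general
    {E : Type*} [NormedAddCommGroup E] [NormedSpace ℝ E] (p : Seminorm ℝ E) {K : Set E}
    {ω : E → ℝ} {dω : E → StrongDual ℝ E} (hω : ∀ u ∈ K, HasFDerivWithinAt ω (dω u) K u)
    {σ : ℝ} (hσ : 0 < σ) (hstrong : ∀ u ∈ K, ∀ v ∈ K, σ / 2 * p (u - v) ^ 2 ≤ bregman ω dω u v)
    {Gω : ℝ} (hlip : ∀ u ∈ K, ∀ v ∈ K, ∀ w, (dω u - dω v) w ≤ Gω * p (u - v) * p w)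
    {x₀ : E} (hx₀ : x₀ ∈ K)
    {ℓ : E → ℝ} {g : StrongDual ℝ E} (hsub : ∀ u ∈ K, ℓ x₀ + g (u - x₀) ≤ ℓ u)
    {Gℓ : ℝ} (hg : ∀ w, g w ≤ Gℓ * p w)
    {r : E → ℝ} (hr : ConvexOn ℝ K r) {η : ℝ} (hη : 0 < η)
    {ystar : E} (hystar : ystar ∈ K)
    (hmin : IsMinOn (fun u => g u + r u + 1 / η * bregman ω dω u x₀) K ystar)
    {x y : E} (hx : x ∈ K) (hy : y ∈ K) :
    ℓ x₀ - ℓ x + r ystar - r x ≤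
      1 / η * (bregman ω dω x x₀ - bregman ω dω x y) + 1 / η * (Gω * p (y - ystar) * p (x - y))
        + η / (2 * σ) * Gℓ ^ 2 := by
  have hsplit : ℓ x₀ - ℓ x ≤ g (x₀ - ystar) + g (ystar - x) := by
    have hchain : g (x - x₀) = -(g (x₀ - ystar) + g (ystar - x)) := by
      simp only [map_sub]
      ring
    linarith [hsub x hx]
  have hyoung : g (x₀ - ystar) ≤ η / (2 * σ) * Gℓ ^ 2 + 1 / η * bregman ω dω ystar x₀ := calc
    g (x₀ - ystar) ≤ Gℓ * p (ystar - x₀) := map_sub_rev p x₀ ystar ▸ hg (x₀ - ystar)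
    _ ≤ η / (2 * σ) * Gℓ ^ 2 + 1 / η * (σ / 2 * p (ystar - x₀) ^ 2) := by
      have hamgm := two_mul_le_add_mul_sq (a := Gℓ) (b := p (ystar - x₀)) (div_pos hη hσ)
      rw [inv_div] at hamgm
      linear_combination hamgm / 2
    _ ≤ η / (2 * σ) * Gℓ ^ 2 + 1 / η * bregman ω dω ystar x₀ := by
      gcongr
      exact hstrong ystar hystar x₀ hx₀
  have hstep := le_mul_bregman_sub_of_isMinOn hr (hω ystar hystar) hmin hystar hx
  have hperturb : bregman ω dω x y - bregman ω dω x ystar ≤ Gω * p (y - ystar) * p (x - y) := by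
    have hpos : 0 ≤ bregman ω dω y ystar := le_trans (by positivity) (hstrong y hy ystar hystar)
    exact (bregman_sub_bregman_le hpos x).trans
      (map_sub_rev p ystar y ▸ hlip ystar hystar y hy (x - y))
  have hperturb_scaled := mul_le_mul_of_nonneg_left hperturb (one_div_pos.2 hη).le
  linarith

/-- **Per-step approximate composite mirror descent inequality.**
Let `K` be a nonempty convex set of `N`-diameter at most `D_K`, `ω` be `σ`-strongly convex
w.r.t. `N` on `K` with `G_ω`-Lipschitz gradient on `K`, `g` a subgradient of the convex
function `ℓ` at `x₀` relative to `K` with `N_*(g) ≤ G_ℓ`, `r` convex, `η > 0`, and let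
`y*` minimize `F x = ⟪g, x⟫ + r x + (1/η) V_ω(x, x₀)` over `K`.  Then for all `x, y ∈ K`:
`ℓ x₀ - ℓ x + r y* - r x ≤ (1/η)(V(x,x₀) - V(x,y)) + (G_ℓ + (2/η) G_ω D_K) N(y - y*)
  + (η/(2σ)) G_ℓ²`. -/
theorem per_step_approx_composite_md
    (d : ℕ) (hd : 1 ≤ d)
    -- N is a norm on ℝ^d
    (N : Euc d → ℝ)
    (hN_add : ∀ x y, N (x + y) ≤ N x + N y)
    (hN_smul : ∀ (c : ℝ) (x : Euc d), N (c • x) = |c| * N x)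
    (hN_pos : ∀ x : Euc d, x ≠ 0 → 0 < N x)
    -- K is a nonempty convex set with N-diameter at most D_K
    (K : Set (Euc d)) (hKne : K.Nonempty) (hKconv : Convex ℝ K)
    (DK : ℝ) (hDK : ∀ x ∈ K, ∀ y ∈ K, N (x - y) ≤ DK)
    -- ω is differentiable with gradient ω', Bregman divergence V
    (ω : Euc d → ℝ) (ω' : Euc d → Euc d)
    (hgrad : ∀ x, HasGradientAt ω (ω' x) x)
    (V : Euc d → Euc d → ℝ)
    (hV : ∀ x y, V x y = ω x - ω y - ⟪ω' y, x - y⟫)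
    -- ω is σ-strongly convex w.r.t. N on K
    (σ : ℝ) (hσ : 0 < σ)
    (hstrong : ∀ x ∈ K, ∀ y ∈ K, ω x ≥ ω y + ⟪ω' y, x - y⟫ + σ / 2 * N (x - y) ^ 2)
    -- ∇ω is G_ω-Lipschitz w.r.t. N on K
    (Gω : ℝ) (hGω : 0 ≤ Gω)
    (hωlip : ∀ x ∈ K, ∀ y ∈ K, dualNorm d N (ω' x - ω' y) ≤ Gω * N (x - y))
    -- x₀ ∈ K, ℓ convex with subgradient g at x₀ relative to K, N_*(g) ≤ G_ℓ
    (x₀ : Euc d) (hx₀ : x₀ ∈ K)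
    (ℓ : Euc d → ℝ) (hℓconv : ConvexOn ℝ Set.univ ℓ)
    (g : Euc d) (hsub : ∀ z ∈ K, ℓ z ≥ ℓ x₀ + ⟪g, z - x₀⟫)
    (Gℓ : ℝ) (hGℓ : 0 ≤ Gℓ) (hg : dualNorm d N g ≤ Gℓ)
    -- r convex, step size η > 0
    (r : Euc d → ℝ) (hrconv : ConvexOn ℝ Set.univ r)
    (η : ℝ) (hη : 0 < η)
    (F : Euc d → ℝ)
    (hF : ∀ u, F u = ⟪g, u⟫ + r u + 1 / η * V u x₀)
    (ystar : Euc d) (hystarK : ystar ∈ K)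
    (hmin : ∀ u ∈ K, F ystar ≤ F u) :
    ∀ x ∈ K, ∀ y ∈ K,
      ℓ x₀ - ℓ x + r ystar - r x ≤
        1 / η * (V x x₀ - V x y) + (Gℓ + 2 / η * Gω * DK) * N (y - ystar)
          + η / (2 * σ) * Gℓ ^ 2 := by
  intro x hx y hy
  let p : Seminorm ℝ (Euc d) := Seminorm.of N hN_add hN_smul
  let dω (u : Euc d) : StrongDual ℝ (Euc d) := InnerProductSpace.toDual ℝ (Euc d) (ω' u)
  obtain rfl : V = bregman ω dω := funext₂ hV
  obtain rfl : F = fun u => ⟪g, u⟫ + r u + 1 / η * bregman ω dω u x₀ := funext hF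
  have hbregman : ∀ u ∈ K, ∀ v ∈ K, σ / 2 * N (u - v) ^ 2 ≤ bregman ω dω u v :=
    fun u hu v hv => by rw [hV]; linarith [hstrong u hu v hv]
  have hlip : ∀ u ∈ K, ∀ v ∈ K, ∀ w, (dω u - dω v) w ≤ Gω * N (u - v) * N w := by
    intro u hu v hv
    rw [← map_sub]
    exact inner_le_mul_of_dualNorm_le (p := p) hN_pos (hωlip u hu v hv)
  have hsharp := per_step_approx_composite_md_general p
    (fun u _ => (hgrad u).hasFDerivAt.hasFDerivWithinAt) hσ hbregman hlip hx₀
    (g := InnerProductSpace.toDual ℝ (Euc d) g) hsub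
    (inner_le_mul_of_dualNorm_le (p := p) hN_pos hg)
    (hrconv.subset (Set.subset_univ K) hKconv) hη hystarK hmin hx hy
  have hcost : 1 / η * (Gω * N (y - ystar) * N (x - y)) ≤
      (Gℓ + 2 / η * Gω * DK) * N (y - ystar) := by
    have hN : 0 ≤ N (y - ystar) := apply_nonneg p _
    have hDK₀ : 0 ≤ DK := (apply_nonneg p (x - y)).trans (hDK x hx y hy)
    calc 1 / η * (Gω * N (y - ystar) * N (x - y))
      _ ≤ 1 / η * (Gω * N (y - ystar) * DK) := by gcongr; exact hDK x hx y hy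
      _ = (0 + 1 / η * Gω * DK) * N (y - ystar) := by ring
      _ ≤ (Gℓ + 2 / η * Gω * DK) * N (y - ystar) := by gcongr; norm_num
  refine hsharp.trans ?_
  gcongr _ + ?_ + _
  exact hcost
end

section
/- Distance of an approximate mirror-descent step to the exact step (Lemma 2(a)): Let K ⊆ E be a nonempty convex set, let ω : E → ℝ be differentiable and σ-strongly convex with respect to N on K (σ > 0), let x₀ ∈ K, g ∈ E, let r : E → ℝ be convex, and let η > 0. Define F(x) = ⟪g, x⟫ + r(x) + (1/η) V_ω(x, x₀). If y* ∈ K minimizes F over K and y ∈ K satisfies F(y) ≤ F(y*) + ρ for some ρ ≥ 0, then N(y − y*) ≤ √(2 η ρ / σ). -/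
/-!
The objective of the step is a convex function plus a multiple of the Bregman divergence, so it
inherits the strong convexity of `ω`. A strongly convex function grows quadratically away from a
minimizer `y*`: the values on the segment from `y*` to `y` lie below the chord by a quadratic defect
but never below the minimum, which bounds `N (y - y*) ^ 2` by a multiple of the gap `F y - F y*`.
-/

open scoped RealInnerProductSpace

section ConvexOnWithModulus

variable {E : Type*} [AddCommGroup E] [Module ℝ E] {s : Set E} {φ f h : E → ℝ}

/-- Uniform convexity of `f` on `s`, where the modulus `φ` is a function of the difference `x - y`.
This is Mathlib's `UniformConvexOn` with `φ ‖x - y‖` replaced by `φ (x - y)`, so that convexity can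
be measured in a norm other than the ambient one. -/
def ConvexOnWithModulus (s : Set E) (φ f : E → ℝ) : Prop :=
  Convex ℝ s ∧ ∀ ⦃x⦄, x ∈ s → ∀ ⦃y⦄, y ∈ s → ∀ ⦃a b : ℝ⦄, 0 ≤ a → 0 ≤ b → a + b = 1 →
    f (a • x + b • y) ≤ a * f x + b * f y - a * b * φ (x - y)

/-- The Bregman divergence `f x - f y - p y (x - y)` of `f`. The linear functional `p y` stands for
the derivative of `f` at `y`; it is a parameter so that `f` may be nonsmooth, with `p y` a
subgradient. -/
def bregmanDiv (f : E → ℝ) (p : E → Module.Dual ℝ E) (x y : E) : ℝ :=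
  f x - f y - p y (x - y)

theorem ConvexOnWithModulus.smul {c : ℝ} (hc : 0 ≤ c) (hf : ConvexOnWithModulus s φ f) :
    ConvexOnWithModulus s (c • φ) (c • f) := by
  refine ⟨hf.1, fun x hx y hy a b ha hb hab ↦ ?_⟩
  calc c * f (a • x + b • y)
      ≤ c * (a * f x + b * f y - a * b * φ (x - y)) := by gcongr; exact hf.2 hx hy ha hb hab
    _ = a * (c * f x) + b * (c * f y) - a * b * (c * φ (x - y)) := by ring

theorem ConvexOnWithModulus.add_convexOn (hf : ConvexOnWithModulus s φ f) (hh : ConvexOn ℝ s h) :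
    ConvexOnWithModulus s φ (f + h) := by
  refine ⟨hf.1, fun x hx y hy a b ha hb hab ↦ ?_⟩
  have hf_le := hf.2 hx hy ha hb hab
  have hh_le := hh.2 hx hy ha hb hab
  simp only [Pi.add_apply, smul_eq_mul] at hh_le ⊢
  linarith

theorem ConvexOnWithModulus.bregmanDiv_left (hf : ConvexOnWithModulus s φ f)
    (p : E → Module.Dual ℝ E) (y : E) :
    ConvexOnWithModulus s φ (fun x ↦ bregmanDiv f p x y) := by
  have h_affine : ConvexOn ℝ s fun x ↦ (-p y) x + (p y y - f y) :=
    ((-p y).convexOn hf.1).add_const _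
  convert hf.add_convexOn h_affine using 1
  ext x
  simp only [bregmanDiv, Pi.add_apply, map_sub, LinearMap.neg_apply]
  ring

theorem convexOnWithModulus_of_le_bregmanDiv {p : E → Module.Dual ℝ E} (hs : Convex ℝ s)
    (hφ : ∀ (c : ℝ) (v : E), φ (c • v) = c ^ 2 * φ v)
    (hf : ∀ x ∈ s, ∀ y ∈ s, φ (x - y) ≤ bregmanDiv f p x y) :
    ConvexOnWithModulus s φ f := by
  refine ⟨hs, fun x hx y hy a b ha hb hab ↦ ?_⟩
  obtain rfl : b = 1 - a := by linarith
  set z := a • x + (1 - a) • y with hz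
  have hz_mem : z ∈ s := hs hx hy ha hb hab
  have hxz : x - z = (1 - a) • (x - y) := by rw [hz]; module
  have hyz : y - z = (-a) • (x - y) := by rw [hz]; module
  have h_at_x : (1 - a) ^ 2 * φ (x - y) ≤ f x - f z - (1 - a) * p z (x - y) := by
    simpa only [bregmanDiv, hxz, hφ, map_smul, smul_eq_mul] using hf x hx z hz_mem
  have h_at_y : (-a) ^ 2 * φ (x - y) ≤ f y - f z - (-a) * p z (x - y) := by
    simpa only [bregmanDiv, hyz, hφ, map_smul, smul_eq_mul] using hf y hy z hz_mem
  -- In the convex combination of the two bounds at `z` the first-order terms cancel.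
  linear_combination a * h_at_x + (1 - a) * h_at_y

open Filter Topology in
theorem ConvexOnWithModulus.le_sub_of_isMinOn {x y : E} (hf : ConvexOnWithModulus s φ f)
    (hx : x ∈ s) (hmin : IsMinOn f s x) (hy : y ∈ s) : φ (y - x) ≤ f y - f x := by
  have h_segment : ∀ t ∈ Set.Ioo (0 : ℝ) 1, (1 - t) * φ (y - x) ≤ f y - f x := by
    rintro t ⟨ht₀, ht₁⟩
    have ht₁' : 0 ≤ 1 - t := sub_nonneg.2 ht₁.le
    have h_min : f x ≤ f (t • y + (1 - t) • x) :=
      hmin (hf.1 hy hx ht₀.le ht₁' (add_sub_cancel t 1))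
    have h_conv := hf.2 hy hx ht₀.le ht₁' (add_sub_cancel t 1)
    refine le_of_mul_le_mul_left ?_ ht₀
    linarith
  have h_lim : Tendsto (fun t : ℝ ↦ (1 - t) * φ (y - x)) (𝓝[>] 0) (𝓝 (φ (y - x))) := by
    refine tendsto_nhdsWithin_of_tendsto_nhds (Continuous.tendsto' ?_ _ _ ?_)
    · fun_prop
    · simp
  exact le_of_tendsto h_lim (eventually_of_mem (Ioo_mem_nhdsGT one_pos) h_segment)

end ConvexOnWithModulus

section MirrorStep

variable {E : Type*} [AddCommGroup E] [Module ℝ E]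

/-- The function `F u = g u + r u + η⁻¹ V_ω(u, x₀)` minimized by a composite mirror-descent step
from `x₀` with step size `η`, with the slope `g` and the derivatives `p` of `ω` taken in the dual
space. -/
noncomputable def mirrorStepObjective (ω : E → ℝ) (p : E → Module.Dual ℝ E)
    (g : Module.Dual ℝ E) (r : E → ℝ) (η : ℝ) (x₀ u : E) : ℝ :=
  g u + r u + 1 / η * bregmanDiv ω p u x₀

protected theorem ConvexOnWithModulus.mirrorStepObjective {K : Set E} {φ ω r : E → ℝ} {η : ℝ}
    (hω : ConvexOnWithModulus K φ ω) (hr : ConvexOn ℝ K r) (hη : 0 ≤ η)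
    (p : E → Module.Dual ℝ E) (g : Module.Dual ℝ E) (x₀ : E) :
    ConvexOnWithModulus K ((1 / η) • φ) (mirrorStepObjective ω p g r η x₀) := by
  convert ((hω.bregmanDiv_left p x₀).smul (one_div_nonneg.2 hη)).add_convexOn
    ((g.convexOn hω.1).add hr) using 1
  ext u
  exact add_comm _ _

theorem approx_step_close_to_exact_step_general {N : E → ℝ}
    (hN : ∀ (c : ℝ) (x : E), N (c • x) = |c| * N x) {K : Set E} (hK : Convex ℝ K)
    {ω : E → ℝ} {p : E → Module.Dual ℝ E} {σ : ℝ} (hσ : 0 < σ)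
    (hω : ∀ x ∈ K, ∀ y ∈ K, σ / 2 * N (x - y) ^ 2 ≤ bregmanDiv ω p x y)
    {x₀ : E} {g : Module.Dual ℝ E} {r : E → ℝ} (hr : ConvexOn ℝ K r) {η : ℝ} (hη : 0 < η)
    {ystar : E} (hystar : ystar ∈ K) (hmin : IsMinOn (mirrorStepObjective ω p g r η x₀) K ystar)
    {ρ : ℝ} {y : E} (hy : y ∈ K)
    (happrox : mirrorStepObjective ω p g r η x₀ y ≤ mirrorStepObjective ω p g r η x₀ ystar + ρ) :
    N (y - ystar) ≤ √(2 * η * ρ / σ) := by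
  have hω_conv : ConvexOnWithModulus K (fun v ↦ σ / 2 * N v ^ 2) ω :=
    convexOnWithModulus_of_le_bregmanDiv hK
      (fun c v ↦ by rw [hN, mul_pow, sq_abs, mul_left_comm]) hω
  have h_growth : 1 / η * (σ / 2 * N (y - ystar) ^ 2) ≤ ρ :=
    ((hω_conv.mirrorStepObjective hr hη.le p g x₀).le_sub_of_isMinOn hystar hmin hy).trans
      (sub_le_iff_le_add'.2 happrox)
  apply Real.le_sqrt_of_sq_le
  rw [one_div, inv_mul_le_iff₀ hη] at h_growth
  rw [le_div_iff₀ hσ]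
  linarith

end MirrorStep

/-- **Distance of an approximate mirror-descent step to the exact step (Lemma 2(a)).**
If `ω` is `σ`-strongly convex w.r.t. a norm `N` on a nonempty convex set `K`,
`F x = ⟪g, x⟫ + r x + (1/η) V_ω(x, x₀)` with `r` convex and `η > 0`, `y*` minimizes
`F` over `K` and `y ∈ K` satisfies `F y ≤ F y* + ρ`, then `N(y - y*) ≤ √(2ηρ/σ)`. -/
theorem approx_step_close_to_exact_step
    (d : ℕ) (hd : 1 ≤ d)
    -- N is a norm on ℝ^d
    (N : Euc d → ℝ)
    (hN_add : ∀ x y, N (x + y) ≤ N x + N y)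
    (hN_smul : ∀ (c : ℝ) (x : Euc d), N (c • x) = |c| * N x)
    (hN_pos : ∀ x : Euc d, x ≠ 0 → 0 < N x)
    -- K is a nonempty convex set
    (K : Set (Euc d)) (hKne : K.Nonempty) (hKconv : Convex ℝ K)
    -- ω is differentiable with gradient ω', Bregman divergence V
    (ω : Euc d → ℝ) (ω' : Euc d → Euc d)
    (hgrad : ∀ x, HasGradientAt ω (ω' x) x)
    (V : Euc d → Euc d → ℝ)
    (hV : ∀ x y, V x y = ω x - ω y - ⟪ω' y, x - y⟫)
    -- ω is σ-strongly convex w.r.t. N on K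
    (σ : ℝ) (hσ : 0 < σ)
    (hstrong : ∀ x ∈ K, ∀ y ∈ K, ω x ≥ ω y + ⟪ω' y, x - y⟫ + σ / 2 * N (x - y) ^ 2)
    -- data of the mirror-descent step
    (x₀ : Euc d) (hx₀ : x₀ ∈ K) (g : Euc d)
    (r : Euc d → ℝ) (hrconv : ConvexOn ℝ Set.univ r)
    (η : ℝ) (hη : 0 < η)
    (F : Euc d → ℝ)
    (hF : ∀ u, F u = ⟪g, u⟫ + r u + 1 / η * V u x₀)
    (ystar : Euc d) (hystarK : ystar ∈ K)
    (hmin : ∀ u ∈ K, F ystar ≤ F u)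
    (ρ : ℝ) (hρ : 0 ≤ ρ)
    (y : Euc d) (hyK : y ∈ K) (happrox : F y ≤ F ystar + ρ) :
    N (y - ystar) ≤ Real.sqrt (2 * η * ρ / σ) := by
  obtain rfl : F = mirrorStepObjective ω (fun x ↦ innerₗ _ (ω' x)) (innerₗ _ g) r η x₀ :=
    funext fun u ↦ by rw [hF, hV]; rfl
  exact approx_step_close_to_exact_step_general hN_smul hKconv hσ
    (fun u hu v hv ↦ by rw [bregmanDiv, innerₗ_apply_apply]; linarith [hstrong u hu v hv])
    (hrconv.subset K.subset_univ hKconv) hη hystarK hmin hyK happrox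
end

section
/- Network disagreement bound (Lemma 2(c)): Let W(1),…,W(T) be doubly stochastic m×m real matrices whose backward products P(t,τ) = W(t)W(t−1)⋯W(τ) satisfy Σ_{j=1}^{m} |P(t,τ)_{ij} − 1/m| ≤ θ κ^{t−τ} for all 1 ≤ τ ≤ t ≤ T and all i, with θ > 0 and κ ∈ (0,1). Let x_{i,t}, e_{i,t}, ε_{i,t} ∈ E (i ∈ {1,…,m}, t ∈ {1,…,T}) satisfy: x_{1,1} = x_{2,1} = ⋯ = x_{m,1} (common initialization); x_{i,t+1} = Σ_{j=1}^{m} W(t)_{ij} ( x_{j,t} + e_{j,t} + ε_{j,t} ); N(e_{j,t}) ≤ √(2 η ρ_t / σ) and N(ε_{j,t}) ≤ (G_ℓ + G_r) η / σ for all j,t, where η > 0, σ > 0, ρ_t ≥ 0, G_ℓ, G_r ≥ 0. Then for every j ∈ {1,…,m}: Σ_{t=1}^{T} Σ_{i=1}^{m} N(x_{i,t} − x_{j,t}) ≤ (2θ/(1−κ)) Σ_{i=1}^{m} N(x_{i,1}) + (2 m θ / (σ (1−κ))) (G_ℓ + G_r) η T + (2 m θ / (1−κ)) √(2/σ) Σ_{t=1}^{T}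 √(η ρ_t). -/
/-- The backward product `P(t,τ) = W(t) W(t-1) ⋯ W(τ)` of a sequence of matrices. -/
noncomputable def backProd {m : ℕ} (W : ℕ → Matrix (Fin m) (Fin m) ℝ) (t τ : ℕ) :
    Matrix (Fin m) (Fin m) ℝ :=
  ((List.range (t + 1 - τ)).map fun k => W (t - k)).prod

open Finset

section BackProd

variable {m : ℕ} (W : ℕ → Matrix (Fin m) (Fin m) ℝ)

theorem backProd_self (t : ℕ) : backProd W t t = W t := by
  simp [backProd]

theorem backProd_succ {t τ : ℕ} (h : τ ≤ t) :
    backProd W (t + 1) τ = W (t + 1) * backProd W t τ := by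
  have hlen : t + 1 + 1 - τ = t + 1 - τ + 1 := by lia
  simp [backProd, hlen, List.range_succ_eq_map, Function.comp_def]

variable {W} {E : Type*} [AddCommMonoid E] [Module ℝ E]

theorem sum_backProd_succ_smul {t τ : ℕ} (h : τ ≤ t) (v : Fin m → E) (i : Fin m) :
    ∑ k, backProd W (t + 1) τ i k • v k =
      ∑ l, W (t + 1) i l • ∑ k, backProd W t τ l k • v k := by
  simp only [backProd_succ W h, Matrix.mul_apply, sum_smul, smul_sum, mul_smul]
  exact sum_comm

theorem perturbed_averaging_eq_add_sum_backProd {T : ℕ}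
    (hW : ∀ t ∈ Icc 1 T, ∀ i, ∑ k, W t i k = 1) {x u : ℕ → Fin m → E} {c : E}
    (hinit : ∀ i, x 1 i = c)
    (hupd : ∀ t ∈ Icc 1 T, ∀ i, x (t + 1) i = ∑ k, W t i k • (x t k + u t k))
    {n : ℕ} (hn : n ≤ T) (i : Fin m) :
    x (n + 1) i = c + ∑ τ ∈ Icc 1 n, ∑ k, backProd W n τ i k • u τ k := by
  induction n generalizing i with
  | zero => simp [hinit]
  | succ n ih =>
    have hmem : n + 1 ∈ Icc 1 T := by simpa using hn
    have hpast : ∑ l, W (n + 1) i l • ∑ τ ∈ Icc 1 n, ∑ k, backProd W n τ l k • u τ k =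
        ∑ τ ∈ Icc 1 n, ∑ k, backProd W (n + 1) τ i k • u τ k := by
      simp only [smul_sum (s := Icc 1 n)]
      rw [sum_comm]
      exact sum_congr rfl fun τ hτ => (sum_backProd_succ_smul (mem_Icc.1 hτ).2 (u τ) i).symm
    calc x (n + 1 + 1) i
        = ∑ l, W (n + 1) i l • (c + ∑ τ ∈ Icc 1 n, ∑ k, backProd W n τ l k • u τ k
            + u (n + 1) l) := by
          rw [hupd _ hmem]
          exact sum_congr rfl fun l _ => by rw [ih (by lia)]
      _ = c + ∑ τ ∈ Icc 1 n, ∑ k, backProd W (n + 1) τ i k • u τ k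
            + ∑ l, W (n + 1) i l • u (n + 1) l := by
          simp only [smul_add, sum_add_distrib, ← sum_smul, hW _ hmem, one_smul, hpast]
      _ = c + ∑ τ ∈ Icc 1 (n + 1), ∑ k, backProd W (n + 1) τ i k • u τ k := by
          rw [sum_Icc_succ_top (by lia), backProd_self, add_assoc]

end BackProd

section Seminorm

variable {𝕜 E ι : Type*} [SeminormedRing 𝕜] [AddCommGroup E] [Module 𝕜 E] (p : Seminorm 𝕜 E)
  {s : Finset ι} {v : ι → E} {B : ℝ}

theorem seminorm_sum_smul_le (a : ι → 𝕜) (hv : ∀ k ∈ s, p (v k) ≤ B) :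
    p (∑ k ∈ s, a k • v k) ≤ (∑ k ∈ s, ‖a k‖) * B :=
  calc p (∑ k ∈ s, a k • v k)
      ≤ ∑ k ∈ s, p (a k • v k) :=
        le_sum_of_subadditive p (map_zero p).le (map_add_le_add p) s _
    _ ≤ ∑ k ∈ s, ‖a k‖ * B := sum_le_sum fun k hk => by
        rw [map_smul_eq_mul]
        exact mul_le_mul_of_nonneg_left (hv k hk) (norm_nonneg _)
    _ = (∑ k ∈ s, ‖a k‖) * B := (sum_mul ..).symm

theorem seminorm_sum_smul_sub_sum_smul_le {a a' w : ι → 𝕜} {δ : ℝ}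
    (ha : ∑ k ∈ s, ‖a k - w k‖ ≤ δ) (ha' : ∑ k ∈ s, ‖a' k - w k‖ ≤ δ)
    (hB : 0 ≤ B) (hv : ∀ k ∈ s, p (v k) ≤ B) :
    p (∑ k ∈ s, a k • v k - ∑ k ∈ s, a' k • v k) ≤ 2 * δ * B :=
  calc p (∑ k ∈ s, a k • v k - ∑ k ∈ s, a' k • v k)
      = p (∑ k ∈ s, (a k - w k) • v k - ∑ k ∈ s, (a' k - w k) • v k) := by
        simp only [sub_smul, sum_sub_distrib, sub_sub_sub_cancel_right]
    _ ≤ p (∑ k ∈ s, (a k - w k) • v k) + p (∑ k ∈ s, (a' k - w k) • v k) :=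
        map_sub_le_add p _ _
    _ ≤ (∑ k ∈ s, ‖a k - w k‖) * B + (∑ k ∈ s, ‖a' k - w k‖) * B :=
        add_le_add (seminorm_sum_smul_le p _ hv) (seminorm_sum_smul_le p _ hv)
    _ ≤ δ * B + δ * B := by gcongr
    _ = 2 * δ * B := by ring

end Seminorm

theorem sum_Ico_geom_convolution_le {K : Type*} [Field K] [LinearOrder K] [IsStrictOrderedRing K]
    {r : K} (hr0 : 0 ≤ r) (hr1 : r < 1) {a b : ℕ} {f : ℕ → K} (hf : ∀ τ ∈ Ico a b, 0 ≤ f τ) :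
    ∑ t ∈ Ico a b, ∑ τ ∈ Ico a t, r ^ (t - (τ + 1)) * f τ ≤ (∑ τ ∈ Ico a b, f τ) / (1 - r) := by
  have hgeom (τ : ℕ) : ∑ t ∈ Ico (τ + 1) b, r ^ (t - (τ + 1)) ≤ 1 / (1 - r) := by
    rw [sum_Ico_eq_sum_range]
    simpa only [add_tsub_cancel_left, Nat.Ico_zero_eq_range, pow_zero] using
      geom_sum_Ico_le_of_lt_one (m := 0) (n := b - (τ + 1)) hr0 hr1
  calc ∑ t ∈ Ico a b, ∑ τ ∈ Ico a t, r ^ (t - (τ + 1)) * f τ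
      = ∑ τ ∈ Ico a b, (∑ t ∈ Ico (τ + 1) b, r ^ (t - (τ + 1))) * f τ := by
        simp only [← sum_Ico_Ico_comm', sum_mul]
    _ ≤ ∑ τ ∈ Ico a b, 1 / (1 - r) * f τ :=
        sum_le_sum fun τ hτ => mul_le_mul_of_nonneg_right (hgeom τ) (hf τ hτ)
    _ = (∑ τ ∈ Ico a b, f τ) / (1 - r) := by
        rw [← mul_sum, one_div_mul_eq_div]

theorem sum_sqrt_add_const {ι : Type*} (s : Finset ι) (ρ : ι → ℝ) (η : ℝ) {σ : ℝ} (hσ : 0 ≤ σ)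
    (B : ℝ) :
    ∑ t ∈ s, (√(2 * η * ρ t / σ) + B) = √(2 / σ) * ∑ t ∈ s, √(η * ρ t) + #s * B := by
  have hsplit (t : ι) : √(2 * η * ρ t / σ) = √(2 / σ) * √(η * ρ t) := by
    rw [← Real.sqrt_mul (by positivity)]
    congr 1
    ring
  simp only [hsplit, sum_add_distrib, mul_sum, sum_const, nsmul_eq_mul]

section Disagreement

variable {m T : ℕ} {E : Type*} [AddCommGroup E] [Module ℝ E] (p : Seminorm ℝ E)
  {W : ℕ → Matrix (Fin m) (Fin m) ℝ} {π : ℕ → Fin m → ℝ} {θ κ : ℝ}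
  {x u : ℕ → Fin m → E} {b : ℕ → ℝ}

theorem seminorm_sub_le_sum_geom (hW : ∀ t ∈ Icc 1 T, ∀ i, ∑ k, W t i k = 1)
    (hP : ∀ τ t : ℕ, 1 ≤ τ → τ ≤ t → t ≤ T → ∀ i,
      ∑ k, |backProd W t τ i k - π τ k| ≤ θ * κ ^ (t - τ))
    (hinit : ∀ i i', x 1 i = x 1 i')
    (hupd : ∀ t ∈ Icc 1 T, ∀ i, x (t + 1) i = ∑ k, W t i k • (x t k + u t k))
    (hu : ∀ t ∈ Icc 1 T, ∀ k, p (u t k) ≤ b t) {t : ℕ} (ht : t ∈ Icc 1 T) (i j : Fin m) :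
    p (x t i - x t j) ≤ 2 * θ * ∑ τ ∈ Ico 1 t, κ ^ (t - (τ + 1)) * b τ := by
  obtain ⟨n, rfl⟩ := Nat.exists_eq_add_of_le' (mem_Icc.1 ht).1
  have hn : n ≤ T := by have := (mem_Icc.1 ht).2; lia
  have hunroll := perturbed_averaging_eq_add_sum_backProd hW (fun k => hinit k j) hupd hn
  rw [hunroll i, hunroll j, add_sub_add_left_eq_sub, ← sum_sub_distrib, mul_sum,
    Ico_add_one_right_eq_Icc]
  refine (le_sum_of_subadditive p (map_zero p).le (map_add_le_add p) _ _).trans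
    (sum_le_sum fun τ hτ => ?_)
  obtain ⟨hτ1, hτn⟩ := mem_Icc.1 hτ
  have huτ := hu τ (mem_Icc.2 ⟨hτ1, hτn.trans hn⟩)
  calc p (∑ k, backProd W n τ i k • u τ k - ∑ k, backProd W n τ j k • u τ k)
      ≤ 2 * (θ * κ ^ (n - τ)) * b τ :=
        seminorm_sum_smul_sub_sum_smul_le p (hP τ n hτ1 hτn hn i) (hP τ n hτ1 hτn hn j)
          ((apply_nonneg p _).trans (huτ i)) fun k _ => huτ k
    _ = 2 * θ * (κ ^ (n + 1 - (τ + 1)) * b τ) := by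
        rw [Nat.add_sub_add_right]
        ring

/-- For row-stochastic `W` the rows of `P(t,τ)` approach weights depending on `τ`, here `π τ`; these
are the uniform weights `1 / m` when `W` is doubly stochastic. -/
theorem network_disagreement_bound_general (hW : ∀ t ∈ Icc 1 T, ∀ i, ∑ k, W t i k = 1)
    (hθ : 0 ≤ θ) (hκ0 : 0 ≤ κ) (hκ1 : κ < 1)
    (hP : ∀ τ t : ℕ, 1 ≤ τ → τ ≤ t → t ≤ T → ∀ i,
      ∑ k, |backProd W t τ i k - π τ k| ≤ θ * κ ^ (t - τ))
    (hinit : ∀ i i', x 1 i = x 1 i')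
    (hupd : ∀ t ∈ Icc 1 T, ∀ i, x (t + 1) i = ∑ k, W t i k • (x t k + u t k))
    (hu : ∀ t ∈ Icc 1 T, ∀ k, p (u t k) ≤ b t) (j : Fin m) :
    ∑ t ∈ Icc 1 T, ∑ i, p (x t i - x t j) ≤ 2 * m * θ / (1 - κ) * ∑ t ∈ Icc 1 T, b t := by
  have hb : ∀ t ∈ Icc 1 T, 0 ≤ b t := fun t ht => (apply_nonneg p (u t j)).trans (hu t ht j)
  calc ∑ t ∈ Icc 1 T, ∑ i, p (x t i - x t j)
      ≤ ∑ t ∈ Icc 1 T, ∑ _i : Fin m, 2 * θ * ∑ τ ∈ Ico 1 t, κ ^ (t - (τ + 1)) * b τ :=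
        sum_le_sum fun t ht => sum_le_sum fun i _ =>
          seminorm_sub_le_sum_geom p hW hP hinit hupd hu ht i j
    _ = 2 * m * θ * ∑ t ∈ Icc 1 T, ∑ τ ∈ Ico 1 t, κ ^ (t - (τ + 1)) * b τ := by
        simp only [sum_const, card_univ, Fintype.card_fin, nsmul_eq_mul, ← mul_sum]
        ring
    _ ≤ 2 * m * θ * ((∑ t ∈ Icc 1 T, b t) / (1 - κ)) := by
        rw [← Ico_add_one_right_eq_Icc] at hb ⊢
        exact mul_le_mul_of_nonneg_left (sum_Ico_geom_convolution_le hκ0 hκ1 hb) (by positivity)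
    _ = 2 * m * θ / (1 - κ) * ∑ t ∈ Icc 1 T, b t := by ring

end Disagreement

/-- **Network disagreement bound (Lemma 2(c)).**
Let `W(1), …, W(T)` be doubly stochastic matrices with geometrically mixing backward
products, and let iterates with common initialization satisfy
`x_{i,t+1} = Σ_j W(t)_{ij}(x_{j,t} + e_{j,t} + ε_{j,t})` with
`N(e_{j,t}) ≤ √(2ηρ_t/σ)` and `N(ε_{j,t}) ≤ (G_ℓ + G_r)η/σ`.  Then for every `j`:
`Σ_{t=1}^T Σ_i N(x_{i,t} - x_{j,t}) ≤ (2θ/(1-κ)) Σ_i N(x_{i,1})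
  + (2mθ/(σ(1-κ)))(G_ℓ+G_r) η T + (2mθ/(1-κ)) √(2/σ) Σ_{t=1}^T √(η ρ_t)`. -/
theorem network_disagreement_bound
    (d m T : ℕ) (hd : 1 ≤ d) (hm : 1 ≤ m) (hT : 1 ≤ T)
    -- N is a norm on ℝ^d
    (N : Euc d → ℝ)
    (hN_add : ∀ x y, N (x + y) ≤ N x + N y)
    (hN_smul : ∀ (c : ℝ) (x : Euc d), N (c • x) = |c| * N x)
    (hN_pos : ∀ x : Euc d, x ≠ 0 → 0 < N x)
    -- W(1), …, W(T) are doubly stochastic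
    (W : ℕ → Matrix (Fin m) (Fin m) ℝ)
    (hW : ∀ t ∈ Finset.Icc 1 T,
      (∀ i j, 0 ≤ W t i j) ∧ (∀ i, ∑ j, W t i j = 1) ∧ (∀ j, ∑ i, W t i j = 1))
    -- geometric mixing of the backward products
    (θ κ : ℝ) (hθ : 0 < θ) (hκ0 : 0 < κ) (hκ1 : κ < 1)
    (hP : ∀ τ t : ℕ, 1 ≤ τ → τ ≤ t → t ≤ T → ∀ i,
      ∑ j, |backProd W t τ i j - 1 / (m : ℝ)| ≤ θ * κ ^ (t - τ))
    -- constants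
    (η σ : ℝ) (hη : 0 < η) (hσ : 0 < σ)
    (ρ : ℕ → ℝ) (hρ : ∀ t, 0 ≤ ρ t)
    (Gℓ Gr : ℝ) (hGℓ : 0 ≤ Gℓ) (hGr : 0 ≤ Gr)
    -- iterates with common initialization
    (x e ε : ℕ → Fin m → Euc d)
    (hinit : ∀ i i', x 1 i = x 1 i')
    (hupd : ∀ t ∈ Finset.Icc 1 T, ∀ i,
      x (t + 1) i = ∑ j, W t i j • (x t j + e t j + ε t j))
    (he : ∀ t ∈ Finset.Icc 1 T, ∀ j, N (e t j) ≤ Real.sqrt (2 * η * ρ t / σ))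
    (hε : ∀ t ∈ Finset.Icc 1 T, ∀ j, N (ε t j) ≤ (Gℓ + Gr) * η / σ) :
    ∀ j : Fin m,
      ∑ t ∈ Finset.Icc 1 T, ∑ i, N (x t i - x t j) ≤
        2 * θ / (1 - κ) * ∑ i, N (x 1 i)
          + 2 * m * θ / (σ * (1 - κ)) * (Gℓ + Gr) * η * T
          + 2 * m * θ / (1 - κ) * Real.sqrt (2 / σ)
              * ∑ t ∈ Finset.Icc 1 T, Real.sqrt (η * ρ t) := by
  intro j
  let p : Seminorm ℝ (Euc d) := Seminorm.of N hN_add hN_smul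
  have hκ : 0 < 1 - κ := sub_pos.2 hκ1
  have hslack : 0 ≤ 2 * θ / (1 - κ) * ∑ i, p (x 1 i) := by positivity
  calc ∑ t ∈ Icc 1 T, ∑ i, N (x t i - x t j)
      ≤ 2 * m * θ / (1 - κ) * ∑ t ∈ Icc 1 T, (√(2 * η * ρ t / σ) + (Gℓ + Gr) * η / σ) :=
        network_disagreement_bound_general p (fun t ht => (hW t ht).2.1) hθ.le hκ0.le hκ1 hP hinit
          (u := fun t k => e t k + ε t k) (by simpa only [add_assoc] using hupd)
          (fun t ht k => (hN_add _ _).trans (add_le_add (he t ht k) (hε t ht k))) j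
    _ = 2 * m * θ / (σ * (1 - κ)) * (Gℓ + Gr) * η * T
          + 2 * m * θ / (1 - κ) * √(2 / σ) * ∑ t ∈ Icc 1 T, √(η * ρ t) := by
        rw [sum_sqrt_add_const _ _ _ hσ.le, Nat.card_Icc, Nat.add_sub_cancel]
        field_simp
        ring
    _ ≤ _ := by
        rw [add_assoc]
        exact le_add_of_nonneg_left hslack
end

section
/- Per-step deviation from the network average under perturbed consensus: Let W(1),…,W(T) be doubly stochastic m×m real matrices whose backward products P(t,τ) = W(t)W(t−1)⋯W(τ) satisfy Σ_{j=1}^{m} |P(t,τ)_{ij} − 1/m| ≤ θ κ^{t−τ} for all 1 ≤ τ ≤ t ≤ T and all i, with θ > 0 and κ ∈ (0,1). Let x_{i,t}, d_{i,t} ∈ E satisfy x_{i,t+1} = Σ_{j=1}^{m} W(t)_{ij} ( x_{j,t} + d_{j,t} ) with N(d_{j,τ}) ≤ D_τ for all j ∈ {1,…,m} and τ ∈ {1,…,T}, and let x̄_t = (1/m) Σ_{i=1}^{m} x_{i,t}. Then for every 1 ≤ t ≤ T: Σ_{i=1}^{m} N( x_{i,t+1} − x̄_{t+1} ) ≤ m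 θ κ^{t−1} max_{1 ≤ j ≤ m} N(x_{j,1}) + m θ Σ_{τ=1}^{t} κ^{t−τ} D_τ. -/
/-!
Write `P(t, τ)` for the backward products and `J` for the matrix all of whose rows are the
stationary weights `w`, so that `J • v` is the constant vector with value the weighted average of
`v`, and `w ᵥ* W(τ) = w` says `J W(τ) = J`. Unrolling the recursion gives
`x(t+1) = P(t, s) x(s) + ∑ τ, P(t, τ) d(τ)`, and since `J P(t, τ) = J`, subtracting the average
replaces every `P(t, τ)` by `P(t, τ) - J`, whose rows are small in `ℓ¹` by the mixing hypothesis.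
-/

open Finset Matrix

/-- The backward product `a t * a (t - 1) * ⋯ * a τ` of a sequence in a monoid, equal to `1` when
`t < τ`. It extends `backProd` from real matrices indexed by `Fin m` to arbitrary monoids. -/
def backwardProd {M : Type*} [Monoid M] (a : ℕ → M) (t τ : ℕ) : M :=
  ((List.range (t + 1 - τ)).map fun k => a (t - k)).prod

theorem backProd_eq_backwardProd {m : ℕ} (W : ℕ → Matrix (Fin m) (Fin m) ℝ) :
    backProd W = backwardProd W :=
  rfl

section BackwardProduct

variable {M : Type*} [Monoid M] {a : ℕ → M} {s t : ℕ}

theorem backwardProd_self (a : ℕ → M) (t : ℕ) : backwardProd a t t = a t := by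
  simp [backwardProd]

theorem backwardProd_succ (a : ℕ → M) (hst : s ≤ t) :
    backwardProd a (t + 1) s = a (t + 1) * backwardProd a t s := by
  have hlen : t + 1 + 1 - s = (t + 1 - s) + 1 := by lia
  simp only [backwardProd, hlen, List.range_succ_eq_map, List.map_cons, List.prod_cons,
    List.map_map, Nat.sub_zero, Function.comp_def, Nat.succ_eq_add_one, Nat.add_sub_add_right]

theorem mul_backwardProd_eq_self {J : M} (hst : s ≤ t) (hJ : ∀ τ ∈ Icc s t, J * a τ = J) :
    J * backwardProd a t s = J := by
  induction t, hst using Nat.le_induction with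
  | base => rw [backwardProd_self, hJ s (by simp)]
  | succ t hst ih =>
    rw [backwardProd_succ a hst, ← mul_assoc, hJ (t + 1) (mem_Icc.2 ⟨by lia, le_rfl⟩),
      ih fun τ hτ => hJ τ (Icc_subset_Icc_right t.le_succ hτ)]

theorem eq_backwardProd_smul_add_sum {V : Type*} [AddCommMonoid V] [DistribMulAction M V]
    {x d : ℕ → V} (hst : s ≤ t) (hx : ∀ τ ∈ Icc s t, x (τ + 1) = a τ • (x τ + d τ)) :
    x (t + 1) = backwardProd a t s • x s + ∑ τ ∈ Icc s t, backwardProd a t τ • d τ := by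
  induction t, hst using Nat.le_induction with
  | base => simp [hx s (by simp), backwardProd_self]
  | succ t hst ih =>
    have hsum : ∑ τ ∈ Icc s t, backwardProd a (t + 1) τ • d τ =
        a (t + 1) • ∑ τ ∈ Icc s t, backwardProd a t τ • d τ := by
      rw [smul_sum]
      refine sum_congr rfl fun τ hτ => ?_
      rw [backwardProd_succ a (mem_Icc.1 hτ).2, mul_smul]
    rw [hx (t + 1) (mem_Icc.2 ⟨by lia, le_rfl⟩),
      ih fun τ hτ => hx τ (Icc_subset_Icc_right t.le_succ hτ),
      sum_Icc_succ_top (by lia), hsum, backwardProd_self, backwardProd_succ a hst, mul_smul,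
      smul_add, smul_add, add_assoc]

end BackwardProduct

theorem sub_smul_eq_backwardProd_sub_smul_add_sum {R V : Type*} [Ring R] [AddCommGroup V]
    [Module R V] {a : ℕ → R} {J : R} {x d : ℕ → V} {s t : ℕ} (hst : s ≤ t)
    (hJ : ∀ τ ∈ Icc s t, J * a τ = J) (hx : ∀ τ ∈ Icc s t, x (τ + 1) = a τ • (x τ + d τ)) :
    x (t + 1) - J • x (t + 1) =
      (backwardProd a t s - J) • x s + ∑ τ ∈ Icc s t, (backwardProd a t τ - J) • d τ := by
  have hJP : ∀ τ ∈ Icc s t, (1 - J) * backwardProd a t τ = backwardProd a t τ - J := by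
    intro τ hτ
    obtain ⟨hsτ, hτt⟩ := mem_Icc.1 hτ
    have hJr : ∀ r ∈ Icc τ t, J * a r = J := fun r hr => hJ r (Icc_subset_Icc_left hsτ hr)
    rw [sub_mul, one_mul, mul_backwardProd_eq_self hτt hJr]
  calc x (t + 1) - J • x (t + 1)
      = (1 - J) • x (t + 1) := by rw [sub_smul, one_smul]
    _ = ((1 - J) * backwardProd a t s) • x s +
          ∑ τ ∈ Icc s t, ((1 - J) * backwardProd a t τ) • d τ := by
        simp only [eq_backwardProd_smul_add_sum hst hx, smul_add, smul_sum, mul_smul]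
    _ = (backwardProd a t s - J) • x s + ∑ τ ∈ Icc s t, (backwardProd a t τ - J) • d τ := by
        rw [hJP s (left_mem_Icc.2 hst), sum_congr rfl fun τ hτ => by rw [hJP τ hτ]]

theorem replicateRow_mul_eq_self {ι n α : Type*} [Fintype ι] [NonUnitalNonAssocSemiring α]
    {A : Matrix ι ι α} {w : ι → α} (hw : w ᵥ* A = w) :
    replicateRow n w * A = replicateRow n w := by
  rw [← replicateRow_vecMul, hw]

theorem const_vecMul_eq_self {ι α : Type*} [Fintype ι] [NonAssocSemiring α] {A : Matrix ι ι α}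
    (hA : ∀ j, ∑ i, A i j = 1) (c : α) : (fun _ => c) ᵥ* A = fun _ => c := by
  ext j
  simp only [vecMul, dotProduct, ← mul_sum, hA j, mul_one]

open scoped Matrix.Module in
theorem perturbed_consensus_sub_average_eq {ι R V : Type*} [Fintype ι] [DecidableEq ι] [Ring R]
    [AddCommGroup V] [Module R V] {W : ℕ → Matrix ι ι R} {w : ι → R} {x d : ℕ → ι → V} {s t : ℕ}
    (hst : s ≤ t) (hW : ∀ τ ∈ Icc s t, w ᵥ* W τ = w)
    (hx : ∀ τ ∈ Icc s t, ∀ i, x (τ + 1) i = ∑ j, W τ i j • (x τ j + d τ j)) (i : ι) :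
    x (t + 1) i - ∑ j, w j • x (t + 1) j =
      ∑ j, (backwardProd W t s i j - w j) • x s j +
        ∑ τ ∈ Icc s t, ∑ j, (backwardProd W t τ i j - w j) • d τ j := by
  have h := sub_smul_eq_backwardProd_sub_smul_add_sum hst
    (fun τ hτ => replicateRow_mul_eq_self (n := ι) (hW τ hτ)) fun τ hτ => funext (hx τ hτ)
  simpa [Finset.sum_apply] using congrFun h i

theorem seminorm_sum_le_sum {F α V : Type*} [AddCommGroup V] [FunLike F V ℝ]
    [AddGroupSeminormClass F V ℝ] (p : F) (s : Finset α) (v : α → V) :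
    p (∑ i ∈ s, v i) ≤ ∑ i ∈ s, p (v i) :=
  le_sum_of_subadditive p (map_zero p).le (map_add_le_add p) s v

section Seminorm

variable {ι 𝕜 V : Type*} [Fintype ι] [SeminormedRing 𝕜] [AddCommGroup V] [Module 𝕜 V]
  (p : Seminorm 𝕜 V)

theorem seminorm_sum_smul_le_s7 {c : ι → 𝕜} {v : ι → V} {b M : ℝ} (hM : 0 ≤ M)
    (hc : ∑ j, ‖c j‖ ≤ b) (hv : ∀ j, p (v j) ≤ M) : p (∑ j, c j • v j) ≤ b * M :=
  calc p (∑ j, c j • v j)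
      ≤ ∑ j, p (c j • v j) := seminorm_sum_le_sum p univ _
    _ = ∑ j, ‖c j‖ * p (v j) := by simp only [map_smul_eq_mul]
    _ ≤ ∑ j, ‖c j‖ * M := by gcongr with j; exact hv j
    _ = (∑ j, ‖c j‖) * M := (sum_mul ..).symm
    _ ≤ b * M := by gcongr

variable [DecidableEq ι] {W : ℕ → Matrix ι ι 𝕜} {w : ι → 𝕜} {x d : ℕ → ι → V} {s t : ℕ}

theorem perturbed_consensus_agent_deviation_le (hst : s ≤ t)
    (hW : ∀ τ ∈ Icc s t, w ᵥ* W τ = w)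
    (hx : ∀ τ ∈ Icc s t, ∀ i, x (τ + 1) i = ∑ j, W τ i j • (x τ j + d τ j)) {i : ι} {β : ℕ → ℝ}
    (hβ : ∀ τ ∈ Icc s t, ∑ j, ‖backwardProd W t τ i j - w j‖ ≤ β τ) {M : ℝ}
    (hM : ∀ j, p (x s j) ≤ M) {D : ℕ → ℝ} (hD : ∀ τ ∈ Icc s t, ∀ j, p (d τ j) ≤ D τ) :
    p (x (t + 1) i - ∑ j, w j • x (t + 1) j) ≤ β s * M + ∑ τ ∈ Icc s t, β τ * D τ := by
  rw [perturbed_consensus_sub_average_eq hst hW hx i]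
  refine (map_add_le_add p _ _).trans (add_le_add ?initial ?perturbations)
  case initial =>
    exact seminorm_sum_smul_le_s7 p ((apply_nonneg p _).trans (hM i)) (hβ s (left_mem_Icc.2 hst)) hM
  case perturbations =>
    refine (seminorm_sum_le_sum p _ _).trans (sum_le_sum fun τ hτ => ?_)
    exact seminorm_sum_smul_le_s7 p ((apply_nonneg p _).trans (hD τ hτ i)) (hβ τ hτ) (hD τ hτ)

theorem perturbed_consensus_average_deviation_general (hst : s ≤ t)
    (hW : ∀ τ ∈ Icc s t, w ᵥ* W τ = w) {β : ℕ → ℝ}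
    (hβ : ∀ τ ∈ Icc s t, ∀ i, ∑ j, ‖backwardProd W t τ i j - w j‖ ≤ β τ)
    (hx : ∀ τ ∈ Icc s t, ∀ i, x (τ + 1) i = ∑ j, W τ i j • (x τ j + d τ j))
    {D : ℕ → ℝ} (hD : ∀ τ ∈ Icc s t, ∀ j, p (d τ j) ≤ D τ) :
    ∑ i, p (x (t + 1) i - ∑ j, w j • x (t + 1) j) ≤
      Fintype.card ι * (β s * (⨆ j, p (x s j)) + ∑ τ ∈ Icc s t, β τ * D τ) := by
  have hsup (j : ι) : p (x s j) ≤ ⨆ j, p (x s j) :=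
    le_ciSup (f := fun j => p (x s j)) (Set.finite_range _).bddAbove j
  refine (sum_le_card_nsmul univ _ _ fun i _ => perturbed_consensus_agent_deviation_le p hst hW hx
    (fun τ hτ => hβ τ hτ i) hsup hD).trans_eq ?_
  rw [nsmul_eq_mul, card_univ]

end Seminorm

/-- **Per-step deviation from the network average under perturbed consensus.**
Let `W(1), …, W(T)` be doubly stochastic `m × m` matrices whose backward products satisfy
`Σ_j |P(t,τ)_{ij} - 1/m| ≤ θ κ^{t-τ}`, and let `x_{i,t+1} = Σ_j W(t)_{ij}(x_{j,t} + d_{j,t})`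
with `N(d_{j,τ}) ≤ D_τ`.  With `x̄_t` the network average, for every `1 ≤ t ≤ T`:
`Σ_i N(x_{i,t+1} - x̄_{t+1}) ≤ m θ κ^{t-1} max_j N(x_{j,1}) + m θ Σ_{τ=1}^t κ^{t-τ} D_τ`. -/
theorem perturbed_consensus_average_deviation
    (d m T : ℕ) (hd : 1 ≤ d) (hm : 1 ≤ m) (hT : 1 ≤ T)
    -- N is a norm on ℝ^d
    (N : Euc d → ℝ)
    (hN_add : ∀ x y, N (x + y) ≤ N x + N y)
    (hN_smul : ∀ (c : ℝ) (x : Euc d), N (c • x) = |c| * N x)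
    (hN_pos : ∀ x : Euc d, x ≠ 0 → 0 < N x)
    -- W(1), …, W(T) are doubly stochastic
    (W : ℕ → Matrix (Fin m) (Fin m) ℝ)
    (hW : ∀ t ∈ Finset.Icc 1 T,
      (∀ i j, 0 ≤ W t i j) ∧ (∀ i, ∑ j, W t i j = 1) ∧ (∀ j, ∑ i, W t i j = 1))
    -- geometric mixing of the backward products
    (θ κ : ℝ) (hθ : 0 < θ) (hκ0 : 0 < κ) (hκ1 : κ < 1)
    (hP : ∀ τ t : ℕ, 1 ≤ τ → τ ≤ t → t ≤ T → ∀ i,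
      ∑ j, |backProd W t τ i j - 1 / (m : ℝ)| ≤ θ * κ ^ (t - τ))
    -- perturbed consensus iterates
    (x dvec : ℕ → Fin m → Euc d)
    (hupd : ∀ t ∈ Finset.Icc 1 T, ∀ i, x (t + 1) i = ∑ j, W t i j • (x t j + dvec t j))
    (D : ℕ → ℝ) (hD : ∀ τ ∈ Finset.Icc 1 T, ∀ j, N (dvec τ j) ≤ D τ)
    (xbar : ℕ → Euc d) (hxbar : ∀ t, xbar t = ((m : ℝ))⁻¹ • ∑ i, x t i) :
    ∀ t : ℕ, 1 ≤ t → t ≤ T →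
      ∑ i, N (x (t + 1) i - xbar (t + 1)) ≤
        m * θ * κ ^ (t - 1) * (⨆ j, N (x 1 j))
          + m * θ * ∑ τ ∈ Finset.Icc 1 t, κ ^ (t - τ) * D τ := by
  intro t ht htT
  have hmem : ∀ τ ∈ Icc 1 t, τ ∈ Icc 1 T := Icc_subset_Icc_right htT
  let p : Seminorm ℝ (Euc d) := Seminorm.of N hN_add hN_smul
  have hp (v : Euc d) : p v = N v := rfl
  have h := perturbed_consensus_average_deviation_general p
    (w := fun _ => 1 / (m : ℝ)) (β := fun τ => θ * κ ^ (t - τ)) ht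
    (fun τ hτ => const_vecMul_eq_self (hW τ (hmem τ hτ)).2.2 _)
    (fun τ hτ => backProd_eq_backwardProd W ▸ hP τ t (mem_Icc.1 hτ).1 (mem_Icc.1 hτ).2 htT)
    (fun τ hτ => hupd τ (hmem τ hτ)) (fun τ hτ => hD τ (hmem τ hτ))
  simpa only [hp, hxbar, smul_sum, mul_sum, mul_add, mul_assoc, one_div, Fintype.card_fin] using h
end

section
/- The two-point sphere estimator is an unbiased gradient estimator of the ball-smoothed function (Lemma 3(c)): Let ℓ : ℝ^d → ℝ be Lipschitz continuous with respect to the Euclidean norm (d ≥ 1), let δ > 0, and let ℓ̆(x) = ⨍_{B} ℓ(x + δ v) dv be the average of v ↦ ℓ(x + δv) over the closed Euclidean unit ball B with respect to Lebesgue measure. Then ℓ̆ is differentiable on ℝ^d and, for every x ∈ ℝ^d, its gradient equals ∇ℓ̆(x) = (d/δ) ∫_{S^{d−1}} ℓ(x + δ u) u dμ(u) = ∫_{S^{d−1}} (d/(2δ)) ( ℓ(x + δ u) − ℓ(x − δ u) ) u dμ(u), where μ is the uniform probability measure on the Euclidean unit sphere S^{d−1}. -/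
open MeasureTheory
open scoped RealInnerProductSpace

/-!
After rescaling by `δ`, moving `x` by `δ • e` translates the unit ball by `e`. In polar coordinates
centred at `x` the translated ball is the star-shaped region `{r • u : 0 ≤ r ≤ ρ(e, u)}` with
`ρ(e, u) = ⟪u, e⟫ + √(1 - ‖e‖² + ⟪u, e⟫²)`. Since `ρ(0, u) = 1` and `ρ(·, u)` has derivative
`⟪u, ·⟫` at `0`, differentiating the integral of `ℓ` over the translated ball only moves the upper
endpoints of the radial integrals, which leaves the integral of `ℓ (x + δ • u) * ⟪u, ·⟫` over the
unit sphere. The surface measure of the sphere is a multiple of `μ` because a rotation-invariant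
measure on the sphere is determined by its mass.
-/

open Metric Module Set
open scoped Pointwise

section RotationInvariance

variable {E : Type*} [NormedAddCommGroup E] [InnerProductSpace ℝ E] [MeasurableSpace E]
  [BorelSpace E]

theorem charFun_eq_of_norm_eq {μ : Measure E}
    (hμ : ∀ R : E ≃ₗᵢ[ℝ] E, μ.map R = μ) {s t : E} (h : ‖s‖ = ‖t‖) :
    charFun μ s = charFun μ t := by
  let R : E ≃ₗᵢ[ℝ] E := (ℝ ∙ (s - t))ᗮ.reflection
  have hR : R s = t := Submodule.reflection_sub h
  have h_emb : MeasurableEmbedding R := R.toHomeomorph.measurableEmbedding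
  calc charFun μ s = ∫ v, Complex.exp (⟪R v, R s⟫ * Complex.I) ∂μ := by
        simp only [charFun_apply, LinearIsometryEquiv.inner_map_map]
    _ = charFun (μ.map R) t := by
        rw [hR, charFun_apply, h_emb.integral_map]
    _ = charFun μ t := by rw [hμ R]

variable [CompleteSpace E] [SecondCountableTopology E]

/- Both sides have the same characteristic function: integrating `exp (i⟪v, ‖t‖ • u⟫)` against
`μ ⊗ ν`, each inner integral is constant by rotation invariance. -/
theorem eq_smul_of_map_linearIsometryEquiv_eq {μ ν : Measure E} [IsProbabilityMeasure μ]
    [IsFiniteMeasure ν] (hμ_norm : ∀ᵐ u ∂μ, ‖u‖ = 1) (hν_norm : ∀ᵐ v ∂ν, ‖v‖ = 1)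
    (hμ : ∀ R : E ≃ₗᵢ[ℝ] E, μ.map R = μ) (hν : ∀ R : E ≃ₗᵢ[ℝ] E, ν.map R = ν) :
    ν = ν univ • μ := by
  have : IsFiniteMeasure (ν univ • μ) := Measure.smul_finite μ (measure_ne_top ν univ)
  refine Measure.ext_of_charFun (funext fun t ↦ ?_)
  have h_integrable : Integrable
      (Function.uncurry fun u v : E ↦ Complex.exp (⟪v, ‖t‖ • u⟫ * Complex.I)) (μ.prod ν) :=
    .of_bound (C := 1) (by fun_prop) (.of_forall fun p ↦ (Complex.norm_exp_ofReal_mul_I _).le)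
  calc charFun ν t = ∫ u, charFun ν (‖t‖ • u) ∂μ := by
        have h : ∀ᵐ u ∂μ, charFun ν (‖t‖ • u) = charFun ν t := by
          filter_upwards [hμ_norm] with u hu
          exact charFun_eq_of_norm_eq hν (by rw [norm_smul, norm_norm, hu, mul_one])
        rw [integral_congr_ae h, integral_const, probReal_univ, one_smul]
    _ = ∫ v, ∫ u, Complex.exp (⟪v, ‖t‖ • u⟫ * Complex.I) ∂μ ∂ν :=
        integral_integral_swap h_integrable
    _ = ∫ v, charFun μ (‖t‖ • v) ∂ν := by
        simp only [charFun_apply, inner_smul_right, real_inner_comm]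
    _ = ν.real univ • charFun μ t := by
        have h : ∀ᵐ v ∂ν, charFun μ (‖t‖ • v) = charFun μ t := by
          filter_upwards [hν_norm] with v hv
          exact charFun_eq_of_norm_eq hμ (by rw [norm_smul, norm_norm, hv, mul_one])
        rw [integral_congr_ae h, integral_const]
    _ = charFun (ν univ • μ) t := by
        simp only [charFun_apply, integral_smul_measure, measureReal_def]

end RotationInvariance

section SurfaceMeasure

variable {E : Type*} [NormedAddCommGroup E] [InnerProductSpace ℝ E] [FiniteDimensional ℝ E]
  [MeasurableSpace E] [BorelSpace E]

theorem map_toSphere_linearIsometryEquiv (R : E ≃ₗᵢ[ℝ] E) :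
    ((volume : Measure E).toSphere.map (↑)).map R = (volume : Measure E).toSphere.map (↑) := by
  have h_preimage (A : Set E) : R ⁻¹' A = R.symm '' A := (R.symm.image_eq_preimage_symm A).symm
  have h_sphere (A : Set E) : sphere 0 1 ∩ R ⁻¹' A = R ⁻¹' (sphere 0 1 ∩ A) := by simp
  have h_cone (A : Set E) : Ioo (0 : ℝ) 1 • R ⁻¹' A = R ⁻¹' (Ioo (0 : ℝ) 1 • A) := by
    rw [h_preimage, h_preimage]
    exact (image_image2_distrib_right R.symm.map_smul).symm
  ext s hs
  have hRs : MeasurableSet (R ⁻¹' s) := R.continuous.measurable hs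
  rw [Measure.map_apply R.continuous.measurable hs, Measure.map_apply measurable_subtype_coe hRs,
    Measure.map_apply measurable_subtype_coe hs,
    Measure.toSphere_apply' _ (measurable_subtype_coe hRs),
    Measure.toSphere_apply' _ (measurable_subtype_coe hs), Subtype.image_preimage_coe,
    Subtype.image_preimage_coe, h_sphere, h_cone,
    R.measurePreserving.measure_preimage_emb R.toHomeomorph.measurableEmbedding]

theorem integral_toSphere_eq_smul_integral {F : Type*} [NormedAddCommGroup F] [NormedSpace ℝ F]
    {μ : Measure E} [IsProbabilityMeasure μ] (hμ_norm : ∀ᵐ u ∂μ, ‖u‖ = 1)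
    (hμ : ∀ R : E ≃ₗᵢ[ℝ] E, μ.map R = μ) (g : E → F) :
    ∫ u : sphere (0 : E) 1, g u ∂(volume : Measure E).toSphere =
      (finrank ℝ E * volume.real (ball (0 : E) 1)) • ∫ u, g u ∂μ := by
  have h_emb : MeasurableEmbedding (Subtype.val : sphere (0 : E) 1 → E) :=
    .subtype_coe isClosed_sphere.measurableSet
  have h_norm : ∀ᵐ u ∂(volume : Measure E).toSphere.map Subtype.val, ‖u‖ = 1 :=
    h_emb.ae_map_iff.2 (.of_forall norm_eq_of_mem_sphere)
  rw [← h_emb.integral_map, eq_smul_of_map_linearIsometryEquiv_eq hμ_norm h_norm hμ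
    map_toSphere_linearIsometryEquiv, integral_smul_measure, h_emb.map_apply, preimage_univ,
    ← measureReal_def, Measure.toSphere_real_apply_univ]

end SurfaceMeasure

section PolarCoordinates

variable {E : Type*} [NormedAddCommGroup E] [NormedSpace ℝ E] [FiniteDimensional ℝ E]
  [Nontrivial E] [MeasurableSpace E] [BorelSpace E] (ν : Measure E) [ν.IsAddHaarMeasure]
  {F : Type*} [NormedAddCommGroup F] [NormedSpace ℝ F]

theorem integral_eq_integral_toSphere_integral_Ioi {f : E → F} (hf : Integrable f ν) :
    ∫ x, f x ∂ν =
      ∫ u, (∫ r in Ioi (0 : ℝ), r ^ (finrank ℝ E - 1) • f (r • (u : E))) ∂ν.toSphere := by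
  let g : sphere (0 : E) 1 × Ioi (0 : ℝ) → F := fun p ↦ f ((p.2 : ℝ) • (p.1 : E))
  have h_polar := ν.measurePreserving_homeomorphUnitSphereProd
  have h_emb := (homeomorphUnitSphereProd E).measurableEmbedding
  have hg (x : ({0}ᶜ : Set E)) : g (homeomorphUnitSphereProd E x) = f x :=
    congrArg (f ∘ Subtype.val) ((homeomorphUnitSphereProd E).symm_apply_apply x)
  have hg_int : Integrable g (ν.toSphere.prod (.volumeIoiPow (finrank ℝ E - 1))) := by
    rw [← h_polar.integrable_comp_emb h_emb]
    simp only [Function.comp_def, hg]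
    exact (integrableOn_iff_comap_subtypeVal (measurableSet_singleton _).compl).1 hf.integrableOn
  have h_radial (u : sphere (0 : E) 1) : ∫ r, g (u, r) ∂Measure.volumeIoiPow (finrank ℝ E - 1) =
      ∫ r in Ioi (0 : ℝ), r ^ (finrank ℝ E - 1) • f (r • (u : E)) := by
    rw [Measure.volumeIoiPow, integral_withDensity_eq_integral_toReal_smul (by fun_prop) (by simp),
      ← integral_subtype_comap measurableSet_Ioi]
    refine integral_congr_ae (.of_forall fun r ↦ ?_)
    simp only [g, ENNReal.toReal_ofReal (pow_nonneg r.2.out.le _)]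
  calc ∫ x, f x ∂ν = ∫ x : ({0}ᶜ : Set E), f x ∂ν.comap (↑) := by
        rw [integral_subtype_comap (measurableSet_singleton _).compl, restrict_compl_singleton]
    _ = ∫ p, g p ∂ν.toSphere.prod (.volumeIoiPow (finrank ℝ E - 1)) := by
        simp only [← hg, h_polar.integral_comp h_emb]
    _ = _ := by simp only [integral_prod _ hg_int, h_radial]

end PolarCoordinates

theorem toDual_integral_smul {α E : Type*} [MeasurableSpace α] {ν : Measure α}
    [NormedAddCommGroup E] [InnerProductSpace ℝ E] [CompleteSpace E] {g : α → ℝ} {h : α → E}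
    (hgh : Integrable (fun a ↦ g a • h a) ν) :
    InnerProductSpace.toDual ℝ E (∫ a, g a • h a ∂ν) = ∫ a, g a • innerSL ℝ (h a) ∂ν := by
  simp only [← map_smul]
  exact ((innerSL ℝ).integral_comp_comm hgh).symm

section UnitBallRadial

variable {E : Type*} [NormedAddCommGroup E] [InnerProductSpace ℝ E]

/-- The radial function of `closedBall e 1` about the origin: for `‖e‖ < 1` and `‖u‖ = 1`, the
distance at which the ray `r ↦ r • u` leaves the ball, the larger root `r` of `‖r • u - e‖ = 1`. -/
noncomputable def unitBallRadial (e u : E) : ℝ := ⟪u, e⟫ + √(1 - ‖e‖ ^ 2 + ⟪u, e⟫ ^ 2)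

theorem smul_mem_closedBall_iff_le_unitBallRadial {e u : E} (he : ‖e‖ < 1) (hu : ‖u‖ = 1) {r : ℝ}
    (hr : 0 ≤ r) : r • u ∈ closedBall e 1 ↔ r ≤ unitBallRadial e u := by
  have h_pos : 0 < 1 - ‖e‖ ^ 2 := by nlinarith [norm_nonneg e]
  have h_norm_sq : ‖r • u - e‖ ^ 2 = (r - ⟪u, e⟫) ^ 2 + ‖e‖ ^ 2 - ⟪u, e⟫ ^ 2 := by
    rw [norm_sub_sq_real, norm_smul, mul_pow, hu, real_inner_smul_left, Real.norm_eq_abs, sq_abs]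
    ring
  have h_neg : -√(1 - ‖e‖ ^ 2 + ⟪u, e⟫ ^ 2) ≤ r - ⟪u, e⟫ := by
    linarith [Real.le_sqrt_of_sq_le (show ⟪u, e⟫ ^ 2 ≤ 1 - ‖e‖ ^ 2 + ⟪u, e⟫ ^ 2 by linarith)]
  calc r • u ∈ closedBall e 1 ↔ ‖r • u - e‖ ^ 2 ≤ 1 := by
        rw [mem_closedBall_iff_norm, sq_le_one_iff₀ (norm_nonneg _)]
    _ ↔ (r - ⟪u, e⟫) ^ 2 ≤ 1 - ‖e‖ ^ 2 + ⟪u, e⟫ ^ 2 := by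
        rw [h_norm_sq]
        constructor <;> intro h <;> linarith
    _ ↔ r ≤ unitBallRadial e u := by
        rw [Real.sq_le (by positivity), and_iff_right h_neg, sub_le_iff_le_add', unitBallRadial]

theorem abs_unitBallRadial_sub_one_le {e u : E} (he : ‖e‖ < 1) (hu : ‖u‖ = 1) :
    |unitBallRadial e u - 1| ≤ ‖e‖ := by
  have h_lower : 1 - ‖e‖ ≤ unitBallRadial e u := by
    refine (smul_mem_closedBall_iff_le_unitBallRadial he hu (sub_nonneg.2 he.le)).1 ?_
    calc dist ((1 - ‖e‖) • u) e ≤ ‖(1 - ‖e‖) • u‖ + ‖e‖ := dist_le_norm_add_norm _ _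
      _ = 1 := by
        rw [norm_smul, hu, Real.norm_of_nonneg (sub_nonneg.2 he.le), mul_one, sub_add_cancel]
  have h_nonneg : 0 ≤ unitBallRadial e u := (sub_nonneg.2 he.le).trans h_lower
  have h_upper : unitBallRadial e u ≤ 1 + ‖e‖ := by
    have h_mem := (smul_mem_closedBall_iff_le_unitBallRadial he hu h_nonneg).2 le_rfl
    simpa [norm_smul, hu, abs_of_nonneg h_nonneg, add_comm] using norm_le_of_mem_closedBall h_mem
  exact abs_sub_le_iff.2 ⟨by linarith, by linarith⟩

@[simp]
theorem unitBallRadial_zero (u : E) : unitBallRadial 0 u = 1 := by simp [unitBallRadial]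

theorem continuous_unitBallRadial (e : E) : Continuous (unitBallRadial e) := by
  unfold unitBallRadial
  fun_prop

theorem hasFDerivAt_unitBallRadial_zero (u : E) :
    HasFDerivAt (unitBallRadial · u) (innerSL ℝ u) 0 := by
  have h_inner : HasFDerivAt (fun e : E ↦ ⟪u, e⟫) (innerSL ℝ u) 0 := (innerSL ℝ u).hasFDerivAt
  have h_norm : HasFDerivAt (fun e : E ↦ ‖e‖ ^ 2) (0 : E →L[ℝ] ℝ) 0 := by
    simpa using (hasStrictFDerivAt_norm_sq (0 : E)).hasFDerivAt
  have h_sqrt : HasFDerivAt (fun e : E ↦ √(1 - ‖e‖ ^ 2 + ⟪u, e⟫ ^ 2)) (0 : E →L[ℝ] ℝ) 0 := by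
    simpa using ((h_norm.const_sub 1).add (h_inner.pow 2)).sqrt (by simp)
  simpa only [unitBallRadial, add_zero] using! h_inner.add h_sqrt

theorem hasFDerivAt_integral_unitBallRadial {g : ℝ → ℝ} (hg : Continuous g) (u : E) :
    HasFDerivAt (fun e ↦ ∫ r in 0..unitBallRadial e u, g r) (g 1 • innerSL ℝ u) 0 := by
  have h_primitive : HasDerivAt (fun ρ ↦ ∫ r in 0..ρ, g r) (g 1) (unitBallRadial 0 u) := by
    rw [unitBallRadial_zero]
    exact hg.integral_hasStrictDerivAt 0 1 |>.hasDerivAt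
  exact h_primitive.comp_hasFDerivAt 0 (hasFDerivAt_unitBallRadial_zero u)

theorem abs_integral_unitBallRadial_sub_le {g : ℝ → ℝ} (hg : Continuous g) {C : ℝ}
    (hC : ∀ r ∈ Icc 0 2, |g r| ≤ C) {e u : E} (he : ‖e‖ < 1) (hu : ‖u‖ = 1) :
    |(∫ r in 0..unitBallRadial e u, g r) - ∫ r in 0..unitBallRadial 0 u, g r| ≤ C * ‖e‖ := by
  have h_dist := abs_unitBallRadial_sub_one_le he hu
  obtain ⟨h_lower, h_upper⟩ := abs_le.1 h_dist
  have h_bound : ∀ r ∈ uIoc 1 (unitBallRadial e u), |g r| ≤ C := fun r hr ↦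
    hC r ⟨(le_min zero_le_one (by linarith)).trans hr.1.le,
      hr.2.trans (max_le one_le_two (by linarith))⟩
  have hC_nonneg : 0 ≤ C := (abs_nonneg _).trans (hC 0 (by simp))
  rw [unitBallRadial_zero, intervalIntegral.integral_interval_sub_left (hg.intervalIntegrable _ _)
    (hg.intervalIntegrable _ _)]
  calc |∫ r in 1..unitBallRadial e u, g r| ≤ C * |unitBallRadial e u - 1| :=
        intervalIntegral.norm_integral_le_of_norm_le_const (E := ℝ) h_bound
    _ ≤ C * ‖e‖ := by gcongr

variable [FiniteDimensional ℝ E] [Nontrivial E] [MeasurableSpace E] [BorelSpace E]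
  (ν : Measure E) [ν.IsAddHaarMeasure]

theorem setIntegral_closedBall_eq_integral_toSphere {F : Type*} [NormedAddCommGroup F]
    [NormedSpace ℝ F] {f : E → F} {e : E} (hf : IntegrableOn f (closedBall e 1) ν) (he : ‖e‖ < 1) :
    ∫ v in closedBall e 1, f v ∂ν =
      ∫ u : sphere (0 : E) 1, (∫ r in 0..unitBallRadial e u,
        r ^ (finrank ℝ E - 1) • f (r • (u : E))) ∂ν.toSphere := by
  rw [← integral_indicator measurableSet_closedBall, integral_eq_integral_toSphere_integral_Ioi ν
    (hf.integrable_indicator measurableSet_closedBall)]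
  refine integral_congr_ae (.of_forall fun u ↦ ?_)
  have hu : ‖(u : E)‖ = 1 := norm_eq_of_mem_sphere u
  have h_nonneg : 0 ≤ unitBallRadial e u := by
    linarith [neg_le_of_abs_le (abs_unitBallRadial_sub_one_le he hu)]
  have h_indicator : EqOn
      (fun r ↦ r ^ (finrank ℝ E - 1) • (closedBall e 1).indicator f (r • (u : E)))
      ((Iic (unitBallRadial e u)).indicator fun r ↦ r ^ (finrank ℝ E - 1) • f (r • (u : E)))
      (Ioi 0) := by
    intro r hr
    simp only [indicator, smul_mem_closedBall_iff_le_unitBallRadial he hu hr.out.le, mem_Iic,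
      smul_ite, smul_zero]
  simp only [setIntegral_congr_fun measurableSet_Ioi h_indicator,
    setIntegral_indicator measurableSet_Iic, Ioi_inter_Iic,
    intervalIntegral.integral_of_le h_nonneg]

theorem hasGradientAt_setIntegral_closedBall_center_zero {f : E → ℝ} (hf : Continuous f) :
    HasGradientAt (fun e ↦ ∫ v in closedBall e 1, f v ∂ν)
      (∫ u : sphere (0 : E) 1, f u • (u : E) ∂ν.toSphere) 0 := by
  let g (u : sphere (0 : E) 1) (r : ℝ) : ℝ := r ^ (finrank ℝ E - 1) * f (r • (u : E))
  have hg : Continuous (Function.uncurry g) := by fun_prop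
  have hg_u (u : sphere (0 : E) 1) : Continuous (g u) := by fun_prop
  obtain ⟨C, hC⟩ := (isCompact_univ.prod isCompact_Icc).exists_bound_of_continuousOn
    (s := (univ : Set (sphere (0 : E) 1)) ×ˢ Icc (0 : ℝ) 2) hg.continuousOn
  have h_cont (e : E) : Continuous fun u : sphere (0 : E) 1 ↦ ∫ r in 0..unitBallRadial e u, g u r :=
    intervalIntegral.continuous_parametric_intervalIntegral_of_continuous hg
      ((continuous_unitBallRadial e).comp continuous_subtype_val)
  have h_polar : (fun e ↦ ∫ v in closedBall e 1, f v ∂ν) =ᶠ[nhds 0]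
      fun e ↦ ∫ u : sphere (0 : E) 1, (∫ r in 0..unitBallRadial e u, g u r) ∂ν.toSphere := by
    filter_upwards [ball_mem_nhds (0 : E) one_pos] with e he
    exact setIntegral_closedBall_eq_integral_toSphere ν
      (hf.continuousOn.integrableOn_compact (isCompact_closedBall e 1)) (mem_ball_zero_iff.1 he)
  have h_deriv (u : sphere (0 : E) 1) :
      HasFDerivAt (fun e : E ↦ ∫ r in 0..unitBallRadial e u, g u r)
        (f u • innerSL ℝ (u : E)) 0 := by
    simpa [g] using hasFDerivAt_integral_unitBallRadial (hg_u u) (u : E)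
  obtain ⟨-, h_fderiv⟩ := hasFDerivAt_integral_of_dominated_loc_of_lip' (𝕜 := ℝ)
    (μ := ν.toSphere) (bound := fun _ ↦ C) (ball_mem_nhds (0 : E) one_pos)
    (fun e _ ↦ (h_cont e).aestronglyMeasurable)
    ((h_cont 0).integrable_of_hasCompactSupport (.of_compactSpace _))
    (Continuous.aestronglyMeasurable (by fun_prop))
    (.of_forall fun u e he ↦ by
      simpa using abs_integral_unitBallRadial_sub_le (hg_u u)
        (fun r hr ↦ hC (u, r) ⟨mem_univ u, hr⟩) (mem_ball_zero_iff.1 he) (norm_eq_of_mem_sphere u))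
    (integrable_const C) (.of_forall h_deriv)
  rw [hasGradientAt_iff_hasFDerivAt, toDual_integral_smul
    (Continuous.integrable_of_hasCompactSupport (by fun_prop) (.of_compactSpace _))]
  exact h_fderiv.congr_of_eventuallyEq h_polar

theorem hasGradientAt_setIntegral_closedBall_comp_add_smul {f : E → ℝ} (hf : Continuous f)
    {δ : ℝ} (hδ : δ ≠ 0) (x : E) :
    HasGradientAt (fun y ↦ ∫ v in closedBall (0 : E) 1, f (y + δ • v) ∂ν)
      (δ⁻¹ • ∫ u : sphere (0 : E) 1, f (x + δ • (u : E)) • (u : E) ∂ν.toSphere) x := by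
  have h_translate (y : E) : ∫ v in closedBall (0 : E) 1, f (y + δ • v) ∂ν =
      ∫ v in closedBall (δ⁻¹ • (y - x)) 1, f (x + δ • v) ∂ν := by
    have h_point (v : E) : x + δ • (δ⁻¹ • (y - x) + v) = y + δ • v := by
      rw [smul_add, smul_inv_smul₀ hδ]
      abel
    simpa only [h_point, preimage_add_closedBall, sub_self] using
      (measurePreserving_add_left ν (δ⁻¹ • (y - x))).setIntegral_preimage_emb
        (measurableEmbedding_addLeft _) (fun v ↦ f (x + δ • v)) (closedBall (δ⁻¹ • (y - x)) 1)
  have h_rescale : HasFDerivAt (fun y ↦ δ⁻¹ • (y - x)) (δ⁻¹ • ContinuousLinearMap.id ℝ E) x :=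
    ((hasFDerivAt_id x).sub_const x).const_smul δ⁻¹
  have h_origin : HasGradientAt (fun e ↦ ∫ v in closedBall e 1, f (x + δ • v) ∂ν)
      (∫ u : sphere (0 : E) 1, f (x + δ • (u : E)) • (u : E) ∂ν.toSphere) (δ⁻¹ • (x - x)) := by
    rw [sub_self, smul_zero]
    exact hasGradientAt_setIntegral_closedBall_center_zero ν (by fun_prop)
  rw [hasGradientAt_iff_hasFDerivAt, funext h_translate]
  simpa using! h_origin.hasFDerivAt.comp x h_rescale

end UnitBallRadial

theorem integrable_of_ae_norm_eq_one {E F : Type*} [NormedAddCommGroup E] [ProperSpace E]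
    [MeasurableSpace E] [BorelSpace E] [NormedAddCommGroup F] {μ : Measure E} [IsFiniteMeasure μ]
    (hμ_norm : ∀ᵐ u ∂μ, ‖u‖ = 1) {f : E → F} (hf : Continuous f) : Integrable f μ := by
  have h_sphere : μ.restrict (sphere 0 1) = μ :=
    Measure.restrict_eq_self_of_ae_mem (by simpa using hμ_norm)
  rw [← h_sphere]
  exact hf.continuousOn.integrableOn_compact (isCompact_sphere 0 1)

theorem integral_sub_comp_neg_smul_self {E : Type*} [NormedAddCommGroup E] [NormedSpace ℝ E]
    [MeasurableSpace E] [BorelSpace E] {μ : Measure E} [μ.IsNegInvariant] {g : E → ℝ}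
    (hg : Integrable (fun u ↦ g u • u) μ) :
    ∫ u, (g u - g (-u)) • u ∂μ = (2 : ℝ) • ∫ u, g u • u ∂μ := by
  have h_neg : ∫ u, g (-u) • u ∂μ = -∫ u, g u • u ∂μ := by
    rw [← integral_neg_eq_self fun u ↦ g u • u, ← integral_neg]
    simp only [smul_neg, neg_neg]
  have h_neg_int : Integrable (fun u ↦ g (-u) • u) μ := by
    simpa [Function.comp_def] using hg.comp_neg.neg
  simp only [sub_smul]
  rw [integral_sub hg h_neg_int, h_neg, sub_neg_eq_add, two_smul]

section UniformMeasure

variable {E : Type*} [NormedAddCommGroup E] [InnerProductSpace ℝ E] [FiniteDimensional ℝ E]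
  [MeasurableSpace E] [BorelSpace E]

theorem hasGradientAt_setAverage_closedBall_comp_add_smul {f : E → ℝ} (hf : Continuous f)
    {δ : ℝ} (hδ : δ ≠ 0) {μ : Measure E} [IsProbabilityMeasure μ]
    (hμ_norm : ∀ᵐ u ∂μ, ‖u‖ = 1) (hμ : ∀ R : E ≃ₗᵢ[ℝ] E, μ.map R = μ) (x : E) :
    HasGradientAt (fun y ↦ ⨍ v in closedBall (0 : E) 1, f (y + δ • v))
      ((finrank ℝ E / δ) • ∫ u, f (x + δ • u) • u ∂μ) x := by
  obtain ⟨u, hu⟩ := hμ_norm.exists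
  have : Nontrivial E := ⟨u, 0, norm_ne_zero_iff.1 (by simp [hu])⟩
  have h_volume : volume.real (ball (0 : E) 1) ≠ 0 :=
    (ENNReal.toReal_pos (measure_ball_pos _ _ one_pos).ne' measure_ball_lt_top.ne).ne'
  have h_average : (fun y ↦ ⨍ v in closedBall (0 : E) 1, f (y + δ • v)) =
      (volume.real (ball (0 : E) 1))⁻¹ • fun y ↦ ∫ v in closedBall (0 : E) 1, f (y + δ • v) := by
    ext y
    rw [setAverage_eq, Measure.addHaar_real_closedBall_eq_addHaar_real_ball, Pi.smul_apply]
  have h_gradient : (finrank ℝ E / δ) • ∫ u, f (x + δ • u) • u ∂μ =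
      (volume.real (ball (0 : E) 1))⁻¹ • δ⁻¹ • ∫ u : sphere (0 : E) 1,
        f (x + δ • (u : E)) • (u : E) ∂(volume : Measure E).toSphere := by
    rw [integral_toSphere_eq_smul_integral hμ_norm hμ fun u ↦ f (x + δ • u) • u, smul_smul,
      smul_smul]
    congr 1
    field_simp
  rw [h_average, h_gradient, hasGradientAt_iff_hasFDerivAt, map_smul]
  exact (hasGradientAt_setIntegral_closedBall_comp_add_smul volume hf hδ x).hasFDerivAt.const_smul _

theorem smoothed_function_gradient_general {f : E → ℝ} (hf : Continuous f) {δ : ℝ} (hδ : δ ≠ 0)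
    {μ : Measure E} [IsProbabilityMeasure μ] (hμ_norm : ∀ᵐ u ∂μ, ‖u‖ = 1)
    (hμ : ∀ R : E ≃ₗᵢ[ℝ] E, μ.map R = μ) (x : E) :
    HasGradientAt (fun y ↦ ⨍ v in closedBall (0 : E) 1, f (y + δ • v))
        ((finrank ℝ E / δ) • ∫ u, f (x + δ • u) • u ∂μ) x ∧
      (finrank ℝ E / δ) • ∫ u, f (x + δ • u) • u ∂μ =
        ∫ u, (finrank ℝ E / (2 * δ) * (f (x + δ • u) - f (x - δ • u))) • u ∂μ := by
  refine ⟨hasGradientAt_setAverage_closedBall_comp_add_smul hf hδ hμ_norm hμ x, ?_⟩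
  have : μ.IsNegInvariant := ⟨hμ (.neg ℝ)⟩
  have h_two_point : ∫ u, (f (x + δ • u) - f (x - δ • u)) • u ∂μ =
      (2 : ℝ) • ∫ u, f (x + δ • u) • u ∂μ := by
    simpa only [smul_neg, ← sub_eq_add_neg] using integral_sub_comp_neg_smul_self
      (integrable_of_ae_norm_eq_one hμ_norm (f := fun u ↦ f (x + δ • u) • u) (by fun_prop))
  simp only [mul_smul]
  rw [integral_smul, h_two_point, smul_smul]
  congr 1
  field_simp

end UniformMeasure

/-- **The two-point sphere estimator is an unbiased gradient estimator of the
ball-smoothed function (Lemma 3(c)).**  Let `ℓ : ℝ^d → ℝ` be Lipschitz (w.r.t. the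
Euclidean norm), `δ > 0`, and `ℓ̆ x = ⨍_{B} ℓ(x + δ v) dv` the average over the closed
Euclidean unit ball.  Let `μ` be the uniform (rotation-invariant) probability measure on
the Euclidean unit sphere, viewed as a measure on `ℝ^d`.  Then `ℓ̆` is differentiable
and its gradient at every `x` equals
`(d/δ) ∫ ℓ(x + δ u) u dμ(u) = ∫ (d/(2δ)) (ℓ(x + δ u) - ℓ(x - δ u)) u dμ(u)`. -/
theorem smoothed_function_gradient
    (d : ℕ) (hd : 1 ≤ d)
    (ℓ : Euc d → ℝ) (G : ℝ) (hG : 0 ≤ G)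
    (hlip : ∀ a b : Euc d, |ℓ a - ℓ b| ≤ G * ‖a - b‖)
    (δ : ℝ) (hδ : 0 < δ)
    (ℓs : Euc d → ℝ)
    (hℓs : ∀ x, ℓs x = ⨍ v in Metric.closedBall (0 : Euc d) 1, ℓ (x + δ • v) ∂volume)
    -- μ is the uniform probability measure on the Euclidean unit sphere:
    -- a rotation-invariant probability measure concentrated on the sphere
    (μ : Measure (Euc d)) (hμprob : IsProbabilityMeasure μ)
    (hμsphere : μ {v : Euc d | ‖v‖ = 1}ᶜ = 0)
    (hμinv : ∀ R : Euc d ≃ₗᵢ[ℝ] Euc d, μ.map (⇑R) = μ) :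
    ∀ x : Euc d,
      HasGradientAt ℓs (((d : ℝ) / δ) • ∫ u, ℓ (x + δ • u) • u ∂μ) x ∧
      ((d : ℝ) / δ) • (∫ u, ℓ (x + δ • u) • u ∂μ) =
        ∫ u, ((d : ℝ) / (2 * δ) * (ℓ (x + δ • u) - ℓ (x - δ • u))) • u ∂μ := by
  have hℓ : Continuous ℓ := (LipschitzWith.of_dist_le' (K := G) fun a b ↦ by
    simpa only [Real.dist_eq, ← dist_eq_norm] using hlip a b).continuous
  simpa only [funext hℓs, finrank_euclideanSpace_fin] using!
    smoothed_function_gradient_general hℓ hδ.ne' (ae_iff.2 hμsphere) hμinv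
end

section
/- Dual-norm bound for the two-point bandit gradient estimator (Lemma 4): Let N be a norm on ℝ^d with dual norm N_*(g) = sup{⟪g,x⟫ : N(x) ≤ 1}, and suppose there are constants p̄, p̄_* > 0 with N(x) ≤ p̄ ‖x‖₂ and N_*(x) ≤ p̄_* ‖x‖₂ for all x ∈ ℝ^d. Let K ⊆ ℝ^d, let ℓ : ℝ^d → ℝ satisfy |ℓ(a) − ℓ(b)| ≤ G N(a − b) for all a, b ∈ K, let δ > 0, let u ∈ ℝ^d with ‖u‖₂ = 1, and let x ∈ ℝ^d be such that x + δu ∈ K and x − δu ∈ K. Then N_*( (d/(2δ)) ( ℓ(x + δu) − ℓ(x − δu) ) u ) ≤ p̄ p̄_* d G. -/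
open scoped RealInnerProductSpace

lemma abs_symmetric_sub_le {E : Type*} [AddCommGroup E] [Module ℝ E] {N ℓ : E → ℝ}
    {K : Set E} {G δ : ℝ} {x u : E}
    (hN_smul : ∀ c : ℝ, 0 ≤ c → ∀ y, N (c • y) = c * N y)
    (hlip : ∀ a ∈ K, ∀ b ∈ K, |ℓ a - ℓ b| ≤ G * N (a - b))
    (hδ : 0 ≤ δ) (hxp : x + δ • u ∈ K) (hxm : x - δ • u ∈ K) :
    |ℓ (x + δ • u) - ℓ (x - δ • u)| ≤ 2 * δ * (G * N u) :=
  calc |ℓ (x + δ • u) - ℓ (x - δ • u)|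
      ≤ G * N ((x + δ • u) - (x - δ • u)) := hlip _ hxp _ hxm
    _ = G * N ((2 * δ) • u) := by congr 2; module
    _ = 2 * δ * (G * N u) := by rw [hN_smul _ (by positivity)]; ring

section TwoPointEstimator

variable {E : Type*} [SeminormedAddCommGroup E] [NormedSpace ℝ E] {N ℓ : E → ℝ} {K : Set E}
  {G δ pb m : ℝ} {x u : E}

lemma abs_symmetric_sub_le_of_le_norm
    (hN_smul : ∀ c : ℝ, 0 ≤ c → ∀ y, N (c • y) = c * N y)
    (hN_pos : ∀ y, y ≠ 0 → 0 < N y) (hN_le : ∀ y, N y ≤ pb * ‖y‖)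
    (hlip : ∀ a ∈ K, ∀ b ∈ K, |ℓ a - ℓ b| ≤ G * N (a - b))
    (hδ : 0 < δ) (hxp : x + δ • u ∈ K) (hxm : x - δ • u ∈ K) :
    |ℓ (x + δ • u) - ℓ (x - δ • u)| ≤ 2 * δ * (G * (pb * ‖u‖)) := by
  rcases eq_or_ne u 0 with rfl | hu
  · simp
  have hdiff := abs_symmetric_sub_le hN_smul hlip hδ.le hxp hxm
  -- The Lipschitz bound at two distinct points forces the constant to be nonnegative.
  have hG : 0 ≤ G := by
    have hGN : 0 ≤ G * N u :=
      nonneg_of_mul_nonneg_right ((abs_nonneg _).trans hdiff) (by positivity)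
    exact nonneg_of_mul_nonneg_left hGN (hN_pos u hu)
  exact hdiff.trans (by gcongr; exact hN_le u)

lemma norm_two_point_estimator_le
    (hN_smul : ∀ c : ℝ, 0 ≤ c → ∀ y, N (c • y) = c * N y)
    (hN_pos : ∀ y, y ≠ 0 → 0 < N y) (hN_le : ∀ y, N y ≤ pb * ‖y‖)
    (hlip : ∀ a ∈ K, ∀ b ∈ K, |ℓ a - ℓ b| ≤ G * N (a - b))
    (hm : 0 ≤ m) (hδ : 0 < δ) (hxp : x + δ • u ∈ K) (hxm : x - δ • u ∈ K) :
    ‖(m / (2 * δ) * (ℓ (x + δ • u) - ℓ (x - δ • u))) • u‖ ≤ pb * m * G * ‖u‖ ^ 2 :=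
  calc ‖(m / (2 * δ) * (ℓ (x + δ • u) - ℓ (x - δ • u))) • u‖
      = m / (2 * δ) * |ℓ (x + δ • u) - ℓ (x - δ • u)| * ‖u‖ := by
        rw [norm_smul, Real.norm_eq_abs, abs_mul, abs_of_nonneg (by positivity)]
    _ ≤ m / (2 * δ) * (2 * δ * (G * (pb * ‖u‖))) * ‖u‖ := by
        gcongr
        exact abs_symmetric_sub_le_of_le_norm hN_smul hN_pos hN_le hlip hδ hxp hxm
    _ = pb * m * G * ‖u‖ ^ 2 := by field_simp

-- `M` plays the role of the dual norm, and `m` that of the dimension.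
theorem bandit_gradient_estimator_bound_general {M : E → ℝ} {pbs : ℝ}
    (hN_smul : ∀ c : ℝ, 0 ≤ c → ∀ y, N (c • y) = c * N y)
    (hN_pos : ∀ y, y ≠ 0 → 0 < N y) (hpbs : 0 ≤ pbs)
    (hN_le : ∀ y, N y ≤ pb * ‖y‖) (hM_le : ∀ y, M y ≤ pbs * ‖y‖)
    (hlip : ∀ a ∈ K, ∀ b ∈ K, |ℓ a - ℓ b| ≤ G * N (a - b))
    (hm : 0 ≤ m) (hδ : 0 < δ) (hxp : x + δ • u ∈ K) (hxm : x - δ • u ∈ K) :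
    M ((m / (2 * δ) * (ℓ (x + δ • u) - ℓ (x - δ • u))) • u) ≤
      pb * pbs * m * G * ‖u‖ ^ 2 :=
  calc M ((m / (2 * δ) * (ℓ (x + δ • u) - ℓ (x - δ • u))) • u)
      ≤ pbs * ‖(m / (2 * δ) * (ℓ (x + δ • u) - ℓ (x - δ • u))) • u‖ := hM_le _
    _ ≤ pbs * (pb * m * G * ‖u‖ ^ 2) := by
        gcongr
        exact norm_two_point_estimator_le hN_smul hN_pos hN_le hlip hm hδ hxp hxm
    _ = pb * pbs * m * G * ‖u‖ ^ 2 := by ring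

end TwoPointEstimator

/-- **Dual-norm bound for the two-point bandit gradient estimator (Lemma 4).**
Suppose `N ≤ p̄ ‖·‖₂` and `N_* ≤ p̄_* ‖·‖₂`, `ℓ` is `G`-Lipschitz w.r.t. `N` on `K`,
`δ > 0`, `‖u‖₂ = 1`, and `x ± δu ∈ K`.  Then
`N_*((d/(2δ)) (ℓ(x + δu) - ℓ(x - δu)) u) ≤ p̄ p̄_* d G`. -/
theorem bandit_gradient_estimator_bound
    (d : ℕ) (hd : 1 ≤ d)
    -- N is a norm on ℝ^d
    (N : Euc d → ℝ)
    (hN_add : ∀ x y, N (x + y) ≤ N x + N y)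
    (hN_smul : ∀ (c : ℝ) (x : Euc d), N (c • x) = |c| * N x)
    (hN_pos : ∀ x : Euc d, x ≠ 0 → 0 < N x)
    -- comparison with the Euclidean norm
    (pb pbs : ℝ) (hpb : 0 < pb) (hpbs : 0 < pbs)
    (hNle : ∀ x : Euc d, N x ≤ pb * ‖x‖)
    (hNsle : ∀ x : Euc d, dualNorm d N x ≤ pbs * ‖x‖)
    -- ℓ is G-Lipschitz w.r.t. N on K
    (K : Set (Euc d))
    (ℓ : Euc d → ℝ) (G : ℝ)
    (hlip : ∀ a ∈ K, ∀ b ∈ K, |ℓ a - ℓ b| ≤ G * N (a - b))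
    (δ : ℝ) (hδ : 0 < δ)
    (u : Euc d) (hu : ‖u‖ = 1)
    (x : Euc d) (hxp : x + δ • u ∈ K) (hxm : x - δ • u ∈ K) :
    dualNorm d N (((d : ℝ) / (2 * δ) * (ℓ (x + δ • u) - ℓ (x - δ • u))) • u) ≤
      pb * pbs * d * G := by
  simpa only [hu, one_pow, mul_one] using bandit_gradient_estimator_bound_general
    (fun c hc y => by rw [hN_smul, abs_of_nonneg hc]) hN_pos hpbs.le hNle hNsle hlip
    d.cast_nonneg hδ hxp hxm
end
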